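/- (Multiple Bailey transformation I under type-B termination.) Let a, x ∈ ℂ^m and s, c_0, c_1, c_2, d_0, d_1, d_2 ∈ ℂ satisfy the balancing condition Σ_{i=1}^m a_i + Σ_{k=0}^{2}(c_k + d_k) = 2δ + 3s and the termination condition a_i = −α_i δ for all i = 1,…,m, for some α = (α_1,…,α_m) ∈ ℕ^m. Set s̃ = δ + 2s − c_2 − d_0 − d_1, c̃_2 = δ + s − d_0 − d_1, d̃_0 = δ + s − c_2 − d_1, d̃_1 = δ + s − c_2 − d_0, and |a| = a_1 + ⋯ + a_m, |α| = α_1 + ⋯ + α_m. Then, for generic parameters (all brackets appearing in denominators nonzero): E^{m,3}( a; x | s̃; (c_0, c_1, c̃_2); (d̃_0, d̃_1, d_2) ) = ( [δ+s−c_0]_{|α|} [δ+s−c_1]_{|α|} / ([δ+s−c_0−d_2]_{|α|} [δ+s−c_1−d_2]_{|α|}) ) · ∏_{i=1}^m ( [δ+s+x_i−d_2]_{α_i} [δ+s−x_i+a_i−|a|−c_0−c_1−d_2]_{α_i} / ([δ+s+x_i]_{α_i} [δ+s−x_i+a_i−|a|−c_0−c_1]_{α_i}) ) · E^{m,3}(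 a; x | s; (c_0, c_1, c_2); (d_0, d_1, d_2) ). -/

import Mathlib

/-!
The transformation is proved first for generic parameters and then extended by continuity.

*Partial fractions.*  The Riemann relation yields the type A partial fraction identity
`partial_fractions`: `∑_j ∏_z [w_j - z] / ∏_{k ≠ j} [w_j - w_k] = 0` whenever `∑ z = ∑ w`.

*Jackson summation.*  The terminating balanced series with two upper and two lower parameters has
a product evaluation (`jackson`), proved by induction on `|α|`.  In the variables
`z₀ = -s - |μ|δ`, `z_i = x_i + μ_iδ`, whose sum does not depend on `μ`, multiplying a summand by
`∏ [z_i - τ]` shifts a parameter: it raises `d₂` for `τ = d₂ - s`, lowers `α_j` for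
`τ = x_j + α_jδ`, and moves `x_q` for `τ = x_q`.  Partial fractions relate these multiples, hence
express the sum for `α` through sums for multi-indices of smaller size; what remains is a second
partial fraction identity and one instance of the Riemann relation.

*Bailey's argument.*  In the series with parameters `s; c₀, c₁, c₂; d₀, d₁, d₂`, the factors that
involve `c₂, d₀, d₁` are the value of a Jackson sum over `ν ≤ μ`.  Exchanging the two sums, the
inner sum over `μ - ν` is again of Jackson type, and its value turns the outer sum into the
transformed series times a constant (`bailey_generic`).

*Genericity.*  The two applications of the Jackson summation require more brackets to be nonzero
than the statement does.  The parameters are moved along a complex line preserving the balancing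
condition; the zeros of the holomorphic function `f` have dense open complement on it, so by
Baire's theorem the generic case applies on a dense set of the line.  The denominators of the
statement do not vanish at the given point, so both sides are continuous there and agree.
-/

open Finset

/-- Shifted factorial `[x]_k = [x][x+δ]⋯[x+(k-1)δ]` with respect to the bracket `f`. -/
noncomputable def sf (f : ℂ → ℂ) (δ : ℂ) (x : ℂ) (k : ℕ) : ℂ :=
  ∏ i ∈ Finset.range k, f (x + (i : ℂ) * δ)

/-- Difference product `Δ(x) = ∏_{i<j} [x_i - x_j]`. -/
noncomputable def Del (f : ℂ → ℂ) {m : ℕ} (x : Fin m → ℂ) : ℂ :=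
  ∏ i : Fin m, ∏ j ∈ Finset.univ.filter (fun j => i < j), f (x i - x j)

/-- The multiple hypergeometric series `Φ^{m,n}_N(a; x | b; c)`. -/
noncomputable def Phi (f : ℂ → ℂ) (δ : ℂ) {m n : ℕ} (a x : Fin m → ℂ)
    (b c : Fin n → ℂ) (N : ℕ) : ℂ :=
  ∑ μ ∈ Finset.Nat.antidiagonalTuple m N,
    (Del f (fun i => x i + (μ i : ℂ) * δ) / Del f x)
      * (∏ i, ∏ j, sf f δ (x i - x j + a j) (μ i) / sf f δ (x i - x j + δ) (μ i))
      * (∏ i, ∏ k, sf f δ (x i + b k) (μ i) / sf f δ (x i + c k) (μ i))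

/-- The `μ`-th summand of the very well-poised series `E^{m,n}(a; x | s; u; v)`. -/
noncomputable def Eterm (f : ℂ → ℂ) (δ : ℂ) {m n : ℕ} (a x : Fin m → ℂ) (s : ℂ)
    (u v : Fin n → ℂ) (μ : Fin m → ℕ) : ℂ :=
  (Del f (fun i => x i + (μ i : ℂ) * δ) / Del f x)
    * (∏ i, f (x i + s + (((∑ j, μ j) + μ i : ℕ) : ℂ) * δ) / f (x i + s))
    * (∏ j, (sf f δ (s + x j) (∑ i, μ i) / sf f δ (δ + s + x j - a j) (∑ i, μ i))
        * ∏ i, sf f δ (x i - x j + a j) (μ i) / sf f δ (x i - x j + δ) (μ i))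
    * (∏ k, (sf f δ (v k) (∑ i, μ i) / sf f δ (δ + s - u k) (∑ i, μ i))
        * ∏ i, sf f δ (x i + u k) (μ i) / sf f δ (x i + δ + s - v k) (μ i))

/-- The very well-poised multiple series `E^{m,n}(a; x | s; u; v)`. -/
noncomputable def Evw (f : ℂ → ℂ) (δ : ℂ) {m n : ℕ} (a x : Fin m → ℂ) (s : ℂ)
    (u v : Fin n → ℂ) : ℂ :=
  ∑' μ : Fin m → ℕ, Eterm f δ a x s u v μ

/-- The one-dimensional very well-poised series `_{r+3}E_{r+2}(s; u_1, …, u_r)`. -/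
noncomputable def E1 (f : ℂ → ℂ) (δ : ℂ) {r : ℕ} (s : ℂ) (u : Fin r → ℂ) : ℂ :=
  ∑' k : ℕ, (f (s + 2 * (k : ℂ) * δ) / f s) * (sf f δ s k / sf f δ δ k)
    * ∏ i, sf f δ (u i) k / sf f δ (δ + s - u i) k

/-! ### Shifted factorials -/

theorem sf_zero' (f : ℂ → ℂ) (δ y : ℂ) : sf f δ y 0 = 1 := by simp [sf]

theorem sf_one' (f : ℂ → ℂ) (δ y : ℂ) : sf f δ y 1 = f y := by simp [sf]

theorem sf_add (f : ℂ → ℂ) (δ y : ℂ) (a b : ℕ) :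
    sf f δ y (a + b) = sf f δ y a * sf f δ (y + a * δ) b := by
  unfold sf
  rw [Finset.prod_range_add]
  congr 1
  refine Finset.prod_congr rfl fun i _ => ?_
  push_cast
  congr 1
  ring

/-- `[y]_k [y + kδ] = [y] [y + δ]_k`: both sides are `[y]_{k+1}`. -/
theorem sf_mul_last (f : ℂ → ℂ) (δ y : ℂ) (k : ℕ) :
    sf f δ y k * f (y + k * δ) = f y * sf f δ (y + δ) k := by
  have h1 := sf_add f δ y k 1
  have h2 := sf_add f δ y 1 k
  rw [sf_one'] at h1 h2
  rw [← h1, add_comm, h2]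
  simp

/-- Reversing the order of the factors of a shifted factorial of an odd bracket. -/
theorem sf_reflect (f : ℂ → ℂ) (hodd : ∀ t : ℂ, f (-t) = -f t) (δ y y' : ℂ) (k : ℕ)
    (h : y + y' = δ - k * δ) : sf f δ y k = (-1) ^ k * sf f δ y' k := by
  unfold sf
  rw [← Finset.prod_range_reflect]
  conv_lhs =>
    rw [Finset.prod_congr rfl (g := fun i : ℕ => (-1) * f (y' + i * δ)) (by
      intro i hi
      have hi' : i < k := Finset.mem_range.mp hi
      rw [Nat.sub_sub, Nat.cast_sub (by omega), neg_one_mul, ← hodd]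
      congr 1
      push_cast
      linear_combination h)]
  rw [Finset.prod_mul_distrib]
  simp

theorem sf_ne_zero (f : ℂ → ℂ) (δ y : ℂ) (k : ℕ)
    (h : ∀ l : ℕ, l < k → f (y + l * δ) ≠ 0) : sf f δ y k ≠ 0 :=
  Finset.prod_ne_zero_iff.mpr fun i hi => h i (Finset.mem_range.mp hi)

theorem sf_eq_zero (f : ℂ → ℂ) (δ y : ℂ) (k l : ℕ) (hl : l < k)
    (h : f (y + l * δ) = 0) : sf f δ y k = 0 :=
  Finset.prod_eq_zero (Finset.mem_range.mpr hl) h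

/-- `y` is generic: the bracket does not vanish on the coset `y + ℤδ`. -/
def NZ (f : ℂ → ℂ) (δ y : ℂ) : Prop := ∀ k : ℤ, f (y + k * δ) ≠ 0

theorem NZ.of {f : ℂ → ℂ} {δ y : ℂ} (h : NZ f δ y) (y' : ℂ) (k : ℤ) (e : y' = y + k * δ) :
    NZ f δ y' := by
  intro l
  have := h (k + l)
  rw [e]
  convert this using 2
  push_cast
  ring

theorem NZ.neg {f : ℂ → ℂ} (hodd : ∀ t : ℂ, f (-t) = -f t) {δ y : ℂ} (h : NZ f δ y) :
    NZ f δ (-y) := by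
  intro l
  have := h (-l)
  rw [← neg_ne_zero, ← hodd]
  convert this using 2
  push_cast
  ring

theorem NZ.ne {f : ℂ → ℂ} {δ y : ℂ} (h : NZ f δ y) : f y ≠ 0 := by
  simpa using h 0

theorem NZ.sf {f : ℂ → ℂ} {δ y : ℂ} (h : NZ f δ y) (k : ℕ) : sf f δ y k ≠ 0 :=
  sf_ne_zero f δ y k fun l _ => by simpa using h l

/-! ### Partial fractions -/

/-- Type A partial fractions: if `∑ z = ∑ w` then
`∑_j ∏_z [w_j - z] / ∏_{k ≠ j} [w_j - w_k] = 0`.  The Riemann relation rewrites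
`[w - z₁][w - z₂]` as a combination of two products, one vanishing at each of two chosen nodes,
which lowers the number of nodes; the coefficient to be inverted is made nonzero by moving
`z₁` and `z₃` in opposite directions. -/
theorem partial_fractions (f : ℂ → ℂ) (hodd : ∀ t : ℂ, f (-t) = -f t) (hcont : Continuous f)
    (hdense : ∀ c : ℂ, Dense {ε : ℂ | f (c + ε) ≠ 0})
    (hRiem : ∀ x y u v : ℂ,
      f (x + y) * f (x - y) * f (u + v) * f (u - v) =
        f (x + u) * f (x - u) * f (y + v) * f (y - v)
          - f (x + v) * f (x - v) * f (y + u) * f (y - u))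
    {κ : Type*} [DecidableEq κ] (w : κ → ℂ) :
    ∀ (n : ℕ) (s : Finset κ) (Z : List ℂ), s.card = n → Z.length = n →
      Z.sum = ∑ i ∈ s, w i → (∀ i ∈ s, ∀ j ∈ s, i ≠ j → f (w i - w j) ≠ 0) →
      ∑ j ∈ s, (Z.map fun z => f (w j - z)).prod / ∏ k ∈ s.erase j, f (w j - w k) = 0 := by
  have f0 : f 0 = 0 := by
    have := hodd 0
    rw [neg_zero] at this
    exact self_eq_neg.mp this
  intro n
  induction n with
  | zero =>
    intro s Z hs _ _ _
    rw [Finset.card_eq_zero.mp hs]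
    simp
  | succ n ih =>
    intro s Z hs hZ hsum hw
    rcases Z with _ | ⟨z1, Z⟩
    · simp at hZ
    rcases Z with _ | ⟨z2, Z⟩
    · have h1 : s.card = 1 := by simp at hZ; omega
      obtain ⟨j, rfl⟩ := Finset.card_eq_one.mp h1
      simp at hsum
      simp [hsum, f0]
    obtain ⟨p, hp, q, hq, hpq⟩ := Finset.one_lt_card.mp (show 1 < s.card by
      simp at hZ; omega)
    -- The step when `[w_p + w_q - z₁ - z₂] ≠ 0`.
    have key : ∀ z1 z2 : ℂ, ∀ Z : List ℂ, Z.length + 2 = n + 1 →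
        z1 + z2 + Z.sum = ∑ i ∈ s, w i → f (w p + w q - z1 - z2) ≠ 0 →
        ∑ j ∈ s, ((z1 :: z2 :: Z).map fun z => f (w j - z)).prod
          / ∏ k ∈ s.erase j, f (w j - w k) = 0 := by
      intro z1 z2 Z hl hsum hne
      let S : κ → ℂ := fun p => ∑ j ∈ s, (f (w j - w p) * f (w j - (z1 + z2 - w p))
          * (Z.map fun z => f (w j - z)).prod) / ∏ k ∈ s.erase j, f (w j - w k)
      have red : ∀ p ∈ s, S p = 0 := by
        intro p hp
        simp only [S]
        rw [← Finset.add_sum_erase s _ hp, sub_self, f0]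
        have h := ih (s.erase p) ((z1 + z2 - w p) :: Z)
          (by rw [Finset.card_erase_of_mem hp]; omega) (by simp; omega)
          (by
            have := Finset.add_sum_erase s w hp
            simp only [List.sum_cons]
            linear_combination hsum - this)
          (fun i hi j hj => hw i (Finset.mem_of_mem_erase hi) j (Finset.mem_of_mem_erase hj))
        simp only [zero_mul, zero_div, zero_add]
        rw [← h]
        refine Finset.sum_congr rfl fun j hj => ?_
        have hjp : j ≠ p := Finset.ne_of_mem_erase hj
        have hjs := Finset.mem_of_mem_erase hj
        rw [← Finset.mul_prod_erase (s.erase j) _ (Finset.mem_erase.mpr ⟨hjp.symm, hp⟩),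
          Finset.erase_right_comm]
        simp only [List.map_cons, List.prod_cons]
        rw [mul_assoc, mul_div_mul_left _ _ (hw j hjs p hp hjp)]
      have three : ∀ t : ℂ, f (t - z1) * f (t - z2) * (f (w p + w q - z1 - z2) * f (w p - w q))
          = f (t - w p) * f (t - (z1 + z2 - w p)) * (f (w q - z2) * f (z1 - w q))
            - f (t - w q) * f (t - (z1 + z2 - w q)) * (f (w p - z2) * f (z1 - w p)) := by
        intro t
        have := hRiem (t - (z1 + z2) / 2) ((z1 - z2) / 2) (w p - (z1 + z2) / 2)
          (w q - (z1 + z2) / 2)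
        ring_nf at this ⊢
        linear_combination this
      have hA : f (w p + w q - z1 - z2) * f (w p - w q) ≠ 0 :=
        mul_ne_zero hne (hw p hp q hq hpq)
      have h3 : (∑ j ∈ s, ((z1 :: z2 :: Z).map fun z => f (w j - z)).prod
          / ∏ k ∈ s.erase j, f (w j - w k)) * (f (w p + w q - z1 - z2) * f (w p - w q))
          = S p * (f (w q - z2) * f (z1 - w q)) - S q * (f (w p - z2) * f (z1 - w p)) := by
        simp only [S]
        rw [Finset.sum_mul, Finset.sum_mul, Finset.sum_mul, ← Finset.sum_sub_distrib]
        refine Finset.sum_congr rfl fun j _ => ?_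
        simp only [List.map_cons, List.prod_cons]
        linear_combination
          ((Z.map fun z => f (w j - z)).prod / ∏ k ∈ s.erase j, f (w j - w k)) * three (w j)
      rw [red p hp, red q hq, zero_mul, zero_mul, sub_zero] at h3
      exact (mul_eq_zero.mp h3).resolve_right hA
    rcases Z with _ | ⟨z3, Z⟩
    · -- Two nodes: `w_p - z₁ = -(w_q - z₂)` and the two terms cancel.
      have h2 : s = {p, q} := by
        symm
        apply Finset.eq_of_subset_of_card_le
        · intro i hi
          simp at hi
          rcases hi with rfl | rfl <;> assumption
        · rw [Finset.card_pair hpq]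
          simp at hZ
          omega
      subst h2
      rw [Finset.sum_pair hpq]
      have e1 : ({p, q} : Finset κ).erase p = {q} := by
        ext i; simp only [Finset.mem_erase, Finset.mem_insert, Finset.mem_singleton]; grind
      have e2 : ({p, q} : Finset κ).erase q = {p} := by
        ext i; simp only [Finset.mem_erase, Finset.mem_insert, Finset.mem_singleton]; grind
      rw [e1, e2]
      simp only [Finset.sum_pair hpq, List.sum_cons, List.sum_nil, add_zero] at hsum
      simp only [List.map_cons, List.map_nil, List.prod_cons, List.prod_nil, mul_one,
        Finset.prod_singleton]
      rw [show w q - z1 = -(w p - z2) by linear_combination -hsum,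
        show w q - z2 = -(w p - z1) by linear_combination -hsum,
        show w q - w p = -(w p - w q) by ring, hodd, hodd, hodd]
      rw [div_neg]
      ring
    · have hc1 : Continuous fun ε : ℂ =>
          ∑ j ∈ s, (((z1 + ε) :: z2 :: (z3 - ε) :: Z).map fun z => f (w j - z)).prod
            / ∏ k ∈ s.erase j, f (w j - w k) := by
        simp only [List.map_cons, List.prod_cons]
        fun_prop
      have hd := hdense (-(w p + w q - z1 - z2))
      have := Continuous.ext_on hd hc1 (continuous_const (y := (0 : ℂ))) (by
        intro ε hε
        refine key (z1 + ε) z2 ((z3 - ε) :: Z) (by simpa using hZ) ?_ ?_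
        · simp only [List.sum_cons] at hsum ⊢
          linear_combination hsum
        · have hε' : f (-(w p + w q - z1 - z2) + ε) ≠ 0 := hε
          rw [← neg_ne_zero, ← hodd]
          convert hε' using 2
          ring)
      simpa using congrFun this 0

/-- Partial fractions over a finite type; the conditional factor omits `k = j`. -/
theorem partial_fractions_fintype (f : ℂ → ℂ) (hodd : ∀ t : ℂ, f (-t) = -f t)
    (hcont : Continuous f) (hdense : ∀ c : ℂ, Dense {ε : ℂ | f (c + ε) ≠ 0})
    (hRiem : ∀ x y u v : ℂ,
      f (x + y) * f (x - y) * f (u + v) * f (u - v) =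
        f (x + u) * f (x - u) * f (y + v) * f (y - v)
          - f (x + v) * f (x - v) * f (y + u) * f (y - u))
    {κ : Type*} [DecidableEq κ] [Fintype κ] (w : κ → ℂ) (Z : List ℂ)
    (hZ : Z.length = Fintype.card κ) (hsum : Z.sum = ∑ i, w i)
    (hw : ∀ i j, i ≠ j → f (w i - w j) ≠ 0) :
    ∑ j, (Z.map fun z => f (w j - z)).prod / ∏ k, (if k = j then 1 else f (w j - w k)) = 0 := by
  rw [← partial_fractions f hodd hcont hdense hRiem w (Fintype.card κ) Finset.univ Z
    Finset.card_univ hZ hsum fun i _ j _ => hw i j]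
  refine Finset.sum_congr rfl fun j _ => ?_
  rw [← Finset.mul_prod_erase Finset.univ _ (Finset.mem_univ j), if_pos rfl, one_mul]
  congr 1
  exact Finset.prod_congr rfl fun k hk => if_neg (Finset.ne_of_mem_erase hk)

theorem prod_flip {ι : Type*} (f : ℂ → ℂ) (hodd : ∀ t : ℂ, f (-t) = -f t) (A : Finset ι)
    (z : ι → ℂ) (τ : ℂ) :
    ∏ i ∈ A, f (τ - z i) = (-1) ^ A.card * ∏ i ∈ A, f (z i - τ) := by
  rw [← Finset.prod_const, ← Finset.prod_mul_distrib]
  refine Finset.prod_congr rfl fun i _ => ?_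
  rw [neg_one_mul, ← hodd, neg_sub]

/-- Partial fractions with nodes `t_j` and `w`, and zeros `y`, `e` and `x_i` for `i ≠ q`. -/
theorem partial_fractions_one (f : ℂ → ℂ) (hodd : ∀ t : ℂ, f (-t) = -f t)
    (hcont : Continuous f) (hdense : ∀ c : ℂ, Dense {ε : ℂ | f (c + ε) ≠ 0})
    (hRiem : ∀ x y u v : ℂ,
      f (x + y) * f (x - y) * f (u + v) * f (u - v) =
        f (x + u) * f (x - u) * f (y + v) * f (y - v)
          - f (x + v) * f (x - v) * f (y + u) * f (y - u))
    {ι : Type*} [DecidableEq ι] [Fintype ι] (t x : ι → ℂ) (q : ι) (w y e : ℂ)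
    (hsum : y + e + ∑ i ∈ univ.erase q, x i = (∑ i, t i) + w)
    (ht : ∀ i j, i ≠ j → f (t i - t j) ≠ 0) (htw : ∀ i, f (t i - w) ≠ 0) :
    f (w - y) * f (w - e) * (∏ i ∈ univ.erase q, f (x i - w)) / (∏ k, f (w - t k))
      + ∑ j, f (t j - y) * f (t j - e) * (∏ i ∈ univ.erase q, f (x i - t j))
          / (f (t j - w) * ∏ k, (if k = j then 1 else f (t j - t k))) = 0 := by
  have hwt : ∀ i, f (w - t i) ≠ 0 := by
    intro i
    rw [← neg_sub, hodd]
    exact neg_ne_zero.mpr (htw i)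
  have hcard : 0 < Fintype.card ι := Fintype.card_pos_iff.mpr ⟨q⟩
  have h := partial_fractions_fintype f hodd hcont hdense hRiem
    (κ := Option ι) (fun o => o.elim w t)
    (y :: e :: (univ.erase q).toList.map x)
    (by simp [Finset.card_erase_of_mem]; omega)
    (by
      simp only [List.sum_cons, Fintype.sum_option, Option.elim, Finset.sum_map_toList]
      linear_combination hsum)
    (by
      rintro (_ | i) (_ | j) hij
      · exact absurd rfl hij
      · exact hwt j
      · exact htw i
      · exact ht i j fun h => hij (by rw [h]))
  simp only [Fintype.sum_option, Fintype.prod_option, List.map_cons, List.prod_cons, List.map_map,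
    Function.comp_def, Finset.prod_map_toList, Option.elim, prod_flip f hodd (univ.erase q)] at h
  simp only [reduceCtorEq, if_true, if_false, Option.some.injEq, one_mul] at h
  have hs : ((-1 : ℂ) ^ (univ.erase q).card) ≠ 0 := by simp
  apply mul_left_cancel₀ hs
  rw [mul_zero, ← h, mul_add, Finset.mul_sum]
  congr 1
  · ring
  · exact Finset.sum_congr rfl fun j _ => by ring

/-- Partial fractions with nodes `t_j`, `p` and `w`, and zeros `z₀`, `y` and `z_i`. -/
theorem partial_fractions_two (f : ℂ → ℂ) (hodd : ∀ t : ℂ, f (-t) = -f t)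
    (hcont : Continuous f) (hdense : ∀ c : ℂ, Dense {ε : ℂ | f (c + ε) ≠ 0})
    (hRiem : ∀ x y u v : ℂ,
      f (x + y) * f (x - y) * f (u + v) * f (u - v) =
        f (x + u) * f (x - u) * f (y + v) * f (y - v)
          - f (x + v) * f (x - v) * f (y + u) * f (y - u))
    {ι : Type*} [DecidableEq ι] [Fintype ι] (t z : ι → ℂ) (p w y z0 : ℂ)
    (hsum : z0 + y + ∑ i, z i = (∑ i, t i) + p + w)
    (ht : ∀ i j, i ≠ j → f (t i - t j) ≠ 0) (htw : ∀ i, f (t i - w) ≠ 0)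
    (htp : ∀ i, f (t i - p) ≠ 0) (hpw : f (p - w) ≠ 0) :
    f (w - y) * (f (w - z0) * ∏ i, f (z i - w)) / (f (w - p) * ∏ k, f (w - t k))
      + f (p - y) * (f (p - z0) * ∏ i, f (z i - p)) / (f (p - w) * ∏ k, f (p - t k))
      + ∑ j, f (t j - y) * (f (t j - z0) * ∏ i, f (z i - t j))
          / (f (t j - w) * f (t j - p) * ∏ k, (if k = j then 1 else f (t j - t k))) = 0 := by
  have flip : ∀ a b : ℂ, f (a - b) ≠ 0 → f (b - a) ≠ 0 := by
    intro a b h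
    rw [← neg_sub, hodd]
    exact neg_ne_zero.mpr h
  have h := partial_fractions_fintype f hodd hcont hdense hRiem
    (κ := Option (Option ι)) (fun o => o.elim w fun o' => o'.elim p t)
    (z0 :: y :: univ.toList.map z)
    (by simp)
    (by
      simp only [List.sum_cons, Fintype.sum_option, Option.elim, Finset.sum_map_toList]
      linear_combination hsum)
    (by
      rintro (_ | _ | i) (_ | _ | j) hij
      · exact absurd rfl hij
      · exact flip _ _ hpw
      · exact flip _ _ (htw j)
      · exact hpw
      · exact absurd rfl hij
      · exact flip _ _ (htp j)
      · exact htw i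
      · exact htp i
      · exact ht i j fun h => hij (by rw [h]))
  simp only [Fintype.sum_option, Fintype.prod_option, List.map_cons, List.prod_cons, List.map_map,
    Function.comp_def, Finset.prod_map_toList, Option.elim, prod_flip f hodd univ z] at h
  simp only [reduceCtorEq, if_true, if_false, Option.some.injEq, one_mul] at h
  have hs : ((-1 : ℂ) ^ (univ : Finset ι).card) ≠ 0 := by simp
  apply mul_left_cancel₀ hs
  rw [mul_zero, ← h, mul_add, mul_add, Finset.mul_sum, add_assoc]
  congr 1
  · ring
  · congr 1
    · ring
    · exact Finset.sum_congr rfl fun j _ => by ring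

/-! ### The factors of the very well-poised summand -/

section factors

variable {ι : Type*} [Fintype ι]

/-- The factor of the summand attached to an upper parameter `u`. -/
noncomputable def Uf (f : ℂ → ℂ) (δ : ℂ) (x : ι → ℂ) (s u : ℂ) (μ : ι → ℕ) : ℂ :=
  (∏ i, sf f δ (x i + u) (μ i)) / sf f δ (δ + s - u) (∑ i, μ i)

/-- The factor of the summand attached to a lower parameter `v`. -/
noncomputable def Vf (f : ℂ → ℂ) (δ : ℂ) (x : ι → ℂ) (s v : ℂ) (μ : ι → ℕ) : ℂ :=
  sf f δ v (∑ i, μ i) / ∏ i, sf f δ (x i + δ + s - v) (μ i)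

/-- The part of the summand that depends on `x` and `s` only.  The quotient of difference products
and the factors `[x_i - x_j + δ]_{μ_i}` are merged into `∏_{i,j} [x_i - x_j - μ_jδ]_{μ_i}`. -/
noncomputable def Bs (f : ℂ → ℂ) (δ : ℂ) (x : ι → ℂ) (s : ℂ) (μ : ι → ℕ) : ℂ :=
  (-1) ^ (∑ i, μ i) * (∏ i, ∏ j, sf f δ (x i - x j - μ j * δ) (μ i))⁻¹
    * ∏ i, (f (x i + s + ((∑ j, μ j : ℕ) + μ i) * δ) / f (x i + s) * sf f δ (s + x i) (∑ j, μ j))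

theorem Uf_add (f : ℂ → ℂ) (δ : ℂ) (x : ι → ℂ) (s u : ℂ) (ν l : ι → ℕ) :
    Uf f δ x s u (ν + l) = Uf f δ x s u ν
      * Uf f δ (fun i => x i + ν i * δ) (s + (∑ i, ν i : ℕ) * δ) u l := by
  unfold Uf
  simp only [Pi.add_apply, Finset.sum_add_distrib, sf_add, Finset.prod_mul_distrib]
  rw [mul_div_mul_comm]
  congr 3
  · funext i
    congr 1
    ring
  · ring

theorem Vf_add (f : ℂ → ℂ) (δ : ℂ) (x : ι → ℂ) (s v : ℂ) (ν l : ι → ℕ) :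
    Vf f δ x s v (ν + l) = Vf f δ x s v ν
      * Vf f δ (fun i => x i + ν i * δ) (s + (∑ i, ν i : ℕ) * δ) (v + (∑ i, ν i : ℕ) * δ) l := by
  unfold Vf
  simp only [Pi.add_apply, Finset.sum_add_distrib, sf_add, Finset.prod_mul_distrib]
  rw [mul_div_mul_comm]
  congr 2
  exact Finset.prod_congr rfl fun i _ => by ring_nf

/-- Raising an upper parameter by `δ`. -/
theorem Uf_up (f : ℂ → ℂ) (δ : ℂ) (x : ι → ℂ) (s u : ℂ) (μ : ι → ℕ) (h : NZ f δ (s - u)) :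
    Uf f δ x s u μ * (f (s - u + (∑ i, μ i : ℕ) * δ) * ∏ i, f (x i + u + μ i * δ))
      = Uf f δ x s (u + δ) μ * (f (s - u) * ∏ i, f (x i + u)) := by
  unfold Uf
  have h1 : sf f δ (δ + s - u) (∑ i, μ i) ≠ 0 := (h.of _ 1 (by push_cast; ring)).sf _
  have h2 : sf f δ (s - u) (∑ i, μ i) ≠ 0 := h.sf _
  have e : sf f δ (δ + s - (u + δ)) (∑ i, μ i) = sf f δ (s - u) (∑ i, μ i) := by
    congr 1; ring
  have e2 := sf_mul_last f δ (s - u) (∑ i, μ i)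
  rw [show s - u + δ = δ + s - u by ring] at e2
  have e3 : (∏ i, sf f δ (x i + u) (μ i)) * ∏ i, f (x i + u + μ i * δ)
      = (∏ i, f (x i + u)) * ∏ i, sf f δ (x i + (u + δ)) (μ i) := by
    rw [← Finset.prod_mul_distrib, ← Finset.prod_mul_distrib]
    refine Finset.prod_congr rfl fun i _ => ?_
    rw [sf_mul_last, add_assoc]
  rw [e, div_mul_eq_mul_div, div_mul_eq_mul_div, div_eq_div_iff h1 h2]
  linear_combination (sf f δ (s - u) (∑ i, μ i) * f (s - u + (∑ i, μ i : ℕ) * δ)) * e3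
    + (∏ i, f (x i + u)) * (∏ i, sf f δ (x i + (u + δ)) (μ i)) * e2

/-- Raising a lower parameter by `δ`. -/
theorem Vf_up (f : ℂ → ℂ) (δ : ℂ) (x : ι → ℂ) (s v : ℂ) (μ : ι → ℕ)
    (h : ∀ i, NZ f δ (x i + s - v)) :
    Vf f δ x s v μ * (f (v + (∑ i, μ i : ℕ) * δ) * ∏ i, f (x i + s - v + μ i * δ))
      = Vf f δ x s (v + δ) μ * (f v * ∏ i, f (x i + s - v)) := by
  unfold Vf
  have h1 : ∏ i, sf f δ (x i + δ + s - v) (μ i) ≠ 0 :=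
    Finset.prod_ne_zero_iff.mpr fun i _ => ((h i).of _ 1 (by push_cast; ring)).sf _
  have h2 : ∏ i, sf f δ (x i + δ + s - (v + δ)) (μ i) ≠ 0 :=
    Finset.prod_ne_zero_iff.mpr fun i _ => ((h i).of _ 0 (by push_cast; ring)).sf _
  have e2 := sf_mul_last f δ v (∑ i, μ i)
  have e3 : (∏ i, sf f δ (x i + δ + s - (v + δ)) (μ i)) * ∏ i, f (x i + s - v + μ i * δ)
      = (∏ i, f (x i + s - v)) * ∏ i, sf f δ (x i + δ + s - v) (μ i) := by
    rw [← Finset.prod_mul_distrib, ← Finset.prod_mul_distrib]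
    refine Finset.prod_congr rfl fun i _ => ?_
    rw [show x i + δ + s - (v + δ) = x i + s - v by ring, sf_mul_last]
    congr 2
    ring
  rw [div_mul_eq_mul_div, div_mul_eq_mul_div, div_eq_div_iff h1 h2]
  linear_combination (sf f δ v (∑ i, μ i) * f (v + (∑ i, μ i : ℕ) * δ)) * e3
    + (∏ i, f (x i + s - v)) * (∏ i, sf f δ (x i + δ + s - v) (μ i)) * e2

/-- Splitting a multi-index `ν + l` in the common part of the summand. -/
theorem Bs_add (f : ℂ → ℂ) (δ : ℂ)
    (hδ : ∀ k : ℤ, k ≠ 0 → f ((k : ℂ) * δ) ≠ 0) (x : ι → ℂ) (s : ℂ) (ν l : ι → ℕ)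
    (hx : ∀ i j, i ≠ j → NZ f δ (x i - x j)) (hs : ∀ i, NZ f δ (x i + s)) :
    Bs f δ x s (ν + l)
        * ((∏ i, ∏ j, sf f δ (x i - x j - (ν j + l j : ℕ) * δ) (ν i))
          * ∏ i, sf f δ (x i + s + (∑ j, (ν j + l j) : ℕ) * δ) (ν i))
      = Bs f δ (fun i => x i + ν i * δ) (s + (∑ i, ν i : ℕ) * δ) l
        * ((-1) ^ (∑ i, ν i) * ∏ i, sf f δ (x i + s + δ) ((∑ j, ν j) + ν i)) := by
  have hne : ∏ i, ∏ j, sf f δ (x i - x j - (ν j + l j : ℕ) * δ) (ν i) ≠ 0 := by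
    refine Finset.prod_ne_zero_iff.mpr fun i _ => Finset.prod_ne_zero_iff.mpr fun j _ => ?_
    by_cases hij : i = j
    · subst hij
      refine sf_ne_zero _ _ _ _ fun k hk => ?_
      have := hδ (k - (ν i + l i)) (by omega)
      convert this using 2
      push_cast
      ring
    · exact ((hx i j hij).of _ (-(ν j + l j : ℕ)) (by push_cast; ring)).sf _
  have e1 : (∏ i, ∏ j, sf f δ (x i - x j - ((ν + l) j : ℕ) * δ) ((ν + l) i))
      = (∏ i, ∏ j, sf f δ (x i - x j - (ν j + l j : ℕ) * δ) (ν i))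
        * ∏ i, ∏ j, sf f δ ((x i + ν i * δ) - (x j + ν j * δ) - l j * δ) (l i) := by
    simp only [Pi.add_apply, sf_add, Finset.prod_mul_distrib]
    congr 1
    refine Finset.prod_congr rfl fun i _ => Finset.prod_congr rfl fun j _ => ?_
    congr 1
    push_cast
    ring
  have e2 : (∏ i, (f (x i + s + ((∑ j, (ν + l) j : ℕ) + (ν + l) i : ℕ) * δ) / f (x i + s)
        * sf f δ (s + x i) (∑ j, (ν + l) j)))
        * ∏ i, sf f δ (x i + s + (∑ j, (ν j + l j) : ℕ) * δ) (ν i)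
      = (∏ i, (f ((x i + ν i * δ) + (s + (∑ i, ν i : ℕ) * δ) + ((∑ j, l j : ℕ) + l i : ℕ) * δ)
          / f ((x i + ν i * δ) + (s + (∑ i, ν i : ℕ) * δ))
        * sf f δ ((s + (∑ i, ν i : ℕ) * δ) + (x i + ν i * δ)) (∑ j, l j)))
        * ∏ i, sf f δ (x i + s + δ) ((∑ j, ν j) + ν i) := by
    rw [← Finset.prod_mul_distrib, ← Finset.prod_mul_distrib]
    refine Finset.prod_congr rfl fun i _ => ?_
    have a1 : sf f δ (s + x i) (∑ j, (ν + l) j)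
        * sf f δ (x i + s + (∑ j, (ν j + l j) : ℕ) * δ) (ν i)
        = sf f δ (x i + s) ((∑ j, ν j) + ν i)
          * sf f δ ((s + (∑ i, ν i : ℕ) * δ) + (x i + ν i * δ)) (∑ j, l j) := by
      rw [add_comm s (x i)]
      have := sf_add f δ (x i + s) (∑ j, (ν j + l j)) (ν i)
      simp only [Pi.add_apply]
      rw [← this, Finset.sum_add_distrib,
        show ∑ j, ν j + ∑ j, l j + ν i = (∑ j, ν j + ν i) + ∑ j, l j by ring, sf_add]
      congr 2
      push_cast
      ring
    have a2 := sf_mul_last f δ (x i + s) ((∑ j, ν j) + ν i)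
    have a3 : f ((x i + ν i * δ) + (s + (∑ i, ν i : ℕ) * δ)) ≠ 0 :=
      ((hs i).of _ ((∑ i, ν i : ℕ) + ν i : ℕ) (by push_cast; ring)).ne
    have a4 := (hs i).ne
    have a5 : f (x i + s + ((∑ j, (ν + l) j : ℕ) + (ν + l) i : ℕ) * δ)
        = f ((x i + ν i * δ) + (s + (∑ i, ν i : ℕ) * δ) + ((∑ j, l j : ℕ) + l i : ℕ) * δ) := by
      congr 1
      simp only [Pi.add_apply, Finset.sum_add_distrib]
      push_cast
      ring
    have a6 : f (x i + s + ((∑ j, ν j) + ν i : ℕ) * δ)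
        = f ((x i + ν i * δ) + (s + (∑ i, ν i : ℕ) * δ)) := by
      congr 1; push_cast; ring
    rw [a6] at a2
    rw [a5, mul_assoc, a1]
    have a7 := (div_eq_div_iff a4 a3).mpr (a2.trans (mul_comm _ _))
    linear_combination
      f ((x i + ν i * δ) + (s + (∑ i, ν i : ℕ) * δ) + ((∑ j, l j : ℕ) + l i : ℕ) * δ)
        * sf f δ (s + (∑ i, ν i : ℕ) * δ + (x i + ν i * δ)) (∑ j, l j) * a7
  unfold Bs
  push_cast at e1 e2 hne ⊢
  rw [e1]
  simp only [Pi.add_apply, Finset.sum_add_distrib, pow_add] at e2 ⊢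
  rw [mul_inv]
  generalize (∏ i, ∏ j, sf f δ (x i - x j - ((ν j : ℂ) + l j) * δ) (ν i)) = X at *
  rw [show ∀ a b Y E F : ℂ, a * b * (X⁻¹ * Y) * E * (X * F) = (a * b * Y) * (E * F) * (X⁻¹ * X) by
    intros; ring, inv_mul_cancel₀ hne, mul_one, e2]
  ring

end factors

/-! ### The multiple Jackson summation -/

section jackson

variable {ι : Type*}

/-- Genericity of the parameters of the Jackson summation.  It is invariant under shifting any
parameter by integer multiples of `δ`. -/
structure JG (f : ℂ → ℂ) (δ : ℂ) (x : ι → ℂ) (s c0 c1 d0 d2 : ℂ) : Prop where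
  hx : ∀ i j, i ≠ j → NZ f δ (x i - x j)
  hs : ∀ i, NZ f δ (x i + s)
  h0 : ∀ i, NZ f δ (x i + s - d0)
  h2 : ∀ i, NZ f δ (x i + s - d2)
  h02 : ∀ i, NZ f δ (x i + s - d0 - d2)
  hc0 : NZ f δ (s - c0)
  hc1 : NZ f δ (s - c1)
  he0 : NZ f δ (s - c0 - d2)
  he1 : NZ f δ (s - c1 - d2)
  hd2 : NZ f δ d2

theorem JG.shift {f : ℂ → ℂ} {δ : ℂ} {x : ι → ℂ} {s c0 c1 d0 d2 : ℂ}
    (h : JG f δ x s c0 c1 d0 d2) (ν : ι → ℕ) (a b c : ℤ) {x' : ι → ℂ} {s' d0' d2' : ℂ}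
    (hx' : ∀ i, x' i = x i + ν i * δ) (hs' : s' = s + a * δ)
    (hd0 : d0' = d0 + b * δ) (hd2 : d2' = d2 + c * δ) : JG f δ x' s' c0 c1 d0' d2' where
  hx i j hij := (h.hx i j hij).of _ (ν i - ν j) (by rw [hx', hx']; push_cast; ring)
  hs i := (h.hs i).of _ (ν i + a) (by rw [hx', hs']; push_cast; ring)
  h0 i := (h.h0 i).of _ (ν i + a - b) (by rw [hx', hs', hd0]; push_cast; ring)
  h2 i := (h.h2 i).of _ (ν i + a - c) (by rw [hx', hs', hd2]; push_cast; ring)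
  h02 i := (h.h02 i).of _ (ν i + a - b - c) (by rw [hx', hs', hd0, hd2]; push_cast; ring)
  hc0 := h.hc0.of _ a (by rw [hs']; ring)
  hc1 := h.hc1.of _ a (by rw [hs']; ring)
  he0 := h.he0.of _ (a - c) (by rw [hs', hd2]; push_cast; ring)
  he1 := h.he1.of _ (a - c) (by rw [hs', hd2]; push_cast; ring)
  hd2 := h.hd2.of _ c hd2

variable [Fintype ι]

/-- The summand of the very well-poised series with two upper and two lower parameters;
`t j` stands for `x j - a j`. -/
noncomputable def T2 (f : ℂ → ℂ) (δ : ℂ) (t x : ι → ℂ) (s c0 c1 d0 d2 : ℂ) (μ : ι → ℕ) : ℂ :=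
  Bs f δ x s μ * (∏ j, Uf f δ x s (-t j) μ) * (Uf f δ x s c0 μ * Uf f δ x s c1 μ)
    * (Vf f δ x s d0 μ * Vf f δ x s d2 μ)

/-- The value of `t` for which the series terminates at `α`. -/
noncomputable def top (δ : ℂ) (α : ι → ℕ) (x : ι → ℂ) : ι → ℂ := fun i => x i + α i * δ

/-- The product side of the Jackson summation. -/
noncomputable def R2 (f : ℂ → ℂ) (δ : ℂ) (α : ι → ℕ) (x : ι → ℂ) (s c0 c1 d0 d2 : ℂ) : ℂ :=
  (∏ i, sf f δ (δ + s + x i) (α i) * sf f δ (δ + s + x i - d0 - d2) (α i)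
      / (sf f δ (δ + s + x i - d0) (α i) * sf f δ (δ + s + x i - d2) (α i)))
    * (sf f δ (δ + s - c0 - d2) (∑ i, α i) * sf f δ (δ + s - c1 - d2) (∑ i, α i)
      / (sf f δ (δ + s - c0) (∑ i, α i) * sf f δ (δ + s - c1) (∑ i, α i)))

theorem prod_Uf_eq_zero (f : ℂ → ℂ) (f0 : f 0 = 0) (δ : ℂ) (α : ι → ℕ) (x : ι → ℂ) (s : ℂ)
    (μ : ι → ℕ) (h : ¬ μ ≤ α) : ∏ j, Uf f δ x s (-top δ α x j) μ = 0 := by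
  obtain ⟨i, hi⟩ := not_forall.mp h
  refine Finset.prod_eq_zero (Finset.mem_univ i) ?_
  unfold Uf
  rw [Finset.prod_eq_zero (Finset.mem_univ i), zero_div]
  refine sf_eq_zero f δ _ _ (α i) (not_le.mp hi) ?_
  rw [← f0]
  congr 1
  unfold top
  ring

theorem T2_eq_zero (f : ℂ → ℂ) (f0 : f 0 = 0) (δ : ℂ) (α : ι → ℕ) (x : ι → ℂ)
    (s c0 c1 d0 d2 : ℂ) (μ : ι → ℕ) (h : ¬ μ ≤ α) :
    T2 f δ (top δ α x) x s c0 c1 d0 d2 μ = 0 := by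
  unfold T2
  rw [prod_Uf_eq_zero f f0 δ α x s μ h]
  ring

/-- `∏ [z_i - τ]` over the variables `z₀ = -s - |μ|δ`, `z_i = x_i + μ_iδ`, up to sign.  Multiplying
the summand by it amounts to shifting a parameter, depending on `τ`. -/
noncomputable def Pt (f : ℂ → ℂ) (δ : ℂ) (x : ι → ℂ) (s τ : ℂ) (μ : ι → ℕ) : ℂ :=
  f (τ + s + (∑ i, μ i : ℕ) * δ) * ∏ i, f (x i + μ i * δ - τ)

/-- At `τ = d₂ - s`, multiplication by `Pt` raises `d₂` by `δ`. -/
theorem T2_raise (f : ℂ → ℂ) (δ : ℂ) (t x : ι → ℂ) (s c0 c1 d0 d2 : ℂ) (μ : ι → ℕ)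
    (h : ∀ i, NZ f δ (x i + s - d2)) :
    T2 f δ t x s c0 c1 d0 d2 μ * Pt f δ x s (d2 - s) μ
      = T2 f δ t x s c0 c1 d0 (d2 + δ) μ * Pt f δ x s (d2 - s) 0 := by
  have e := Vf_up f δ x s d2 μ h
  have e1 : Pt f δ x s (d2 - s) μ
      = f (d2 + (∑ i, μ i : ℕ) * δ) * ∏ i, f (x i + s - d2 + μ i * δ) := by
    unfold Pt
    congr 1
    · congr 1; ring
    · exact Finset.prod_congr rfl fun i _ => by congr 1; ring
  have e2 : Pt f δ x s (d2 - s) 0 = f d2 * ∏ i, f (x i + s - d2) := by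
    unfold Pt
    congr 1
    · congr 1; simp
    · exact Finset.prod_congr rfl fun i _ => by congr 1; simp; ring
  rw [e1, e2]
  unfold T2
  linear_combination (Bs f δ x s μ * (∏ j, Uf f δ x s (-t j) μ)
    * (Uf f δ x s c0 μ * Uf f δ x s c1 μ) * Vf f δ x s d0 μ) * e

variable [DecidableEq ι]

theorem T2_sum_ext (f : ℂ → ℂ) (f0 : f 0 = 0) (δ : ℂ) (α β : ι → ℕ) (x : ι → ℂ)
    (s c0 c1 d0 d2 : ℂ) (h : α ≤ β) :
    ∑ μ ∈ Finset.Iic β, T2 f δ (top δ α x) x s c0 c1 d0 d2 μ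
      = ∑ μ ∈ Finset.Iic α, T2 f δ (top δ α x) x s c0 c1 d0 d2 μ := by
  symm
  refine Finset.sum_subset (fun μ hμ => ?_) fun μ _ hμ => ?_
  · exact Finset.mem_Iic.mpr ((Finset.mem_Iic.mp hμ).trans h)
  · exact T2_eq_zero f f0 δ α x s c0 c1 d0 d2 μ fun h' => hμ (Finset.mem_Iic.mpr h')

/-- At `τ = t_j`, multiplication by `Pt` lowers `t_j` by `δ`, i.e. lowers `α_j` by one. -/
theorem T2_lower (f : ℂ → ℂ) (δ : ℂ) (t x : ι → ℂ) (s c0 c1 d0 d2 : ℂ) (μ : ι → ℕ) (j : ι)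
    (h : NZ f δ (t j + s)) :
    T2 f δ t x s c0 c1 d0 d2 μ * Pt f δ x s (t j) μ
      = T2 f δ (Function.update t j (t j - δ)) x s c0 c1 d0 d2 μ * Pt f δ x s (t j) 0 := by
  have e := Uf_up f δ x s (-t j) μ (h.of _ 0 (by push_cast; ring))
  have e1 : Pt f δ x s (t j) μ
      = f (s - -t j + (∑ i, μ i : ℕ) * δ) * ∏ i, f (x i + -t j + μ i * δ) := by
    unfold Pt
    congr 1
    · congr 1; ring
    · exact Finset.prod_congr rfl fun i _ => by congr 1; ring
  have e2 : Pt f δ x s (t j) 0 = f (s - -t j) * ∏ i, f (x i + -t j) := by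
    unfold Pt
    congr 1
    · congr 1; simp; ring
    · exact Finset.prod_congr rfl fun i _ => by congr 1; simp; ring
  rw [e1, e2]
  have e3 : ∏ k, Uf f δ x s (-Function.update t j (t j - δ) k) μ
      = Uf f δ x s (-t j + δ) μ * ∏ k ∈ univ.erase j, Uf f δ x s (-t k) μ := by
    rw [← Finset.mul_prod_erase univ _ (Finset.mem_univ j), Function.update_self]
    congr 1
    · congr 1; ring
    · exact Finset.prod_congr rfl fun k hk => by
        rw [Function.update_of_ne (Finset.ne_of_mem_erase hk)]
  unfold T2
  rw [e3, ← Finset.mul_prod_erase univ (fun k => Uf f δ x s (-t k) μ) (Finset.mem_univ j)]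
  linear_combination (Bs f δ x s μ * (∏ k ∈ univ.erase j, Uf f δ x s (-t k) μ)
    * (Uf f δ x s c0 μ * Uf f δ x s c1 μ) * (Vf f δ x s d0 μ * Vf f δ x s d2 μ)) * e

/-- Evaluation at the unit multi-index. -/
theorem Uf_single (f : ℂ → ℂ) (δ : ℂ) (x : ι → ℂ) (s u : ℂ) (q : ι) :
    Uf f δ x s u (Pi.single q 1) = f (x q + u) / f (δ + s - u) := by
  unfold Uf
  congr 1
  · rw [Finset.prod_eq_single q]
    · simp [sf_one']
    · intro i _ hi; simp [hi, sf_zero']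
    · simp
  · simp [sf_one']

theorem Vf_single (f : ℂ → ℂ) (δ : ℂ) (x : ι → ℂ) (s v : ℂ) (q : ι) :
    Vf f δ x s v (Pi.single q 1) = f v / f (x q + δ + s - v) := by
  unfold Vf
  congr 1
  · simp [sf_one']
  · rw [Finset.prod_eq_single q]
    · simp [sf_one']
    · intro i _ hi; simp [hi, sf_zero']
    · simp

/-- The constant relating the terms with `μ_q ≥ 1` to a series with `x_q`, `s`, `d₀`, `d₂` raised. -/
noncomputable def cst (f : ℂ → ℂ) (δ : ℂ) (t x : ι → ℂ) (s c0 c1 d0 d2 : ℂ) (q : ι) : ℂ :=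
  (-1) ^ (Fintype.card ι + 1) * ((∏ i, f (x i + s + δ)) * f (x q + s + 2 * δ))
    * (∏ j, f (x q - t j) / f (δ + s + t j))
    * (f (x q + c0) / f (δ + s - c0) * (f (x q + c1) / f (δ + s - c1)))
    * (f d0 / f (x q + δ + s - d0) * (f d2 / f (x q + δ + s - d2)))

/-- At `τ = x_q`, multiplication by `Pt` gives a summand of the series with `x_q`, `s`, `d₀`, `d₂`
raised by `δ`, at a multi-index with one unit removed at `q`. -/
theorem T2_shift (f : ℂ → ℂ) (hodd : ∀ t : ℂ, f (-t) = -f t) (δ : ℂ)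
    (hδ : ∀ k : ℤ, k ≠ 0 → f ((k : ℂ) * δ) ≠ 0) (t x : ι → ℂ) (s c0 c1 d0 d2 : ℂ)
    (q : ι) (l : ι → ℕ)
    (hx : ∀ i j, i ≠ j → NZ f δ (x i - x j)) (hs : ∀ i, NZ f δ (x i + s)) :
    T2 f δ t x s c0 c1 d0 d2 (Pi.single q 1 + l) * Pt f δ x s (x q) (Pi.single q 1 + l)
      = cst f δ t x s c0 c1 d0 d2 q
        * T2 f δ t (fun i => x i + (Pi.single q 1 : ι → ℕ) i * δ) (s + δ) c0 c1 (d0 + δ) (d2 + δ)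
          l := by
  have hB := Bs_add f δ hδ x s (Pi.single q 1) l hx hs
  have hsum : ∑ i, (Pi.single q 1 : ι → ℕ) i = 1 := by simp
  have p1 : (∏ i, ∏ j, sf f δ (x i - x j - ((Pi.single q 1 : ι → ℕ) j + l j : ℕ) * δ)
        ((Pi.single q 1 : ι → ℕ) i))
      = (-1) ^ Fintype.card ι
        * ∏ j, f (x j + ((Pi.single q 1 : ι → ℕ) j + l j : ℕ) * δ - x q) := by
    rw [Finset.prod_eq_single q]
    · simp only [Pi.single_eq_same, sf_one']
      rw [← Finset.card_univ, ← prod_flip f hodd]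
      exact Finset.prod_congr rfl fun i _ => by congr 1; ring
    · intro i _ hi; simp [hi, sf_zero']
    · simp
  have p2 : ∀ y : ℂ, (∏ i, sf f δ (x i + s + y) ((Pi.single q 1 : ι → ℕ) i)) = f (x q + s + y) := by
    intro y
    rw [Finset.prod_eq_single q]
    · simp [sf_one']
    · intro i _ hi; simp [hi, sf_zero']
    · simp
  have p3 : (∏ i, sf f δ (x i + s + δ) (1 + (Pi.single q 1 : ι → ℕ) i))
      = (∏ i, f (x i + s + δ)) * f (x q + s + 2 * δ) := by
    simp only [sf_add, sf_one', Finset.prod_mul_distrib]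
    congr 1
    rw [Finset.prod_eq_single q]
    · simp [sf_one']; congr 1; ring
    · intro i _ hi; simp [hi, sf_zero']
    · simp
  rw [p1, p2, hsum, p3] at hB
  have hP : Pt f δ x s (x q) (Pi.single q 1 + l)
      = f (x q + s + (∑ j, ((Pi.single q 1 : ι → ℕ) j + l j) : ℕ) * δ)
        * ∏ j, f (x j + ((Pi.single q 1 : ι → ℕ) j + l j : ℕ) * δ - x q) := rfl
  rw [hP]
  unfold T2 cst
  simp only [Uf_add, Vf_add, hsum, Finset.prod_mul_distrib, Uf_single, Vf_single, Nat.cast_one,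
    one_mul] at hB ⊢
  simp only [sub_neg_eq_add, ← sub_eq_add_neg] at hB ⊢
  have hsq : ((-1 : ℂ) ^ Fintype.card ι) * (-1) ^ Fintype.card ι = 1 := by
    rw [← mul_pow]; simp
  rw [pow_succ]
  generalize (-1 : ℂ) ^ Fintype.card ι = σ at *
  generalize (∏ j, f (x j + ((Pi.single q 1 : ι → ℕ) j + l j : ℕ) * δ - x q)) = X at *
  generalize f (x q + s + (∑ j, ((Pi.single q 1 : ι → ℕ) j + l j) : ℕ) * δ) = Y at *
  have hB' : Bs f δ x s (Pi.single q 1 + l) * (Y * X)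
      = σ * (Bs f δ (fun i => x i + (Pi.single q 1 : ι → ℕ) i * δ) (s + δ) l
        * ((-1) ^ 1 * ((∏ i, f (x i + s + δ)) * f (x q + s + 2 * δ)))) := by
    rw [← hB]
    linear_combination -(Bs f δ x s (Pi.single q 1 + l) * Y * X) * hsq
  simp only [pow_one] at hB'
  generalize (∏ i, f (x i + s + δ)) * f (x q + s + 2 * δ) = Q at *
  generalize Bs f δ x s (Pi.single q 1 + l) = B1 at *
  generalize Bs f δ (fun i => x i + (Pi.single q 1 : ι → ℕ) i * δ) (s + δ) l = B2 at *
  rw [show ∀ a b c d e g h i j k : ℂ, B1 * (a * b) * (c * d * (e * g)) * (h * i * (j * k)) * (Y * X)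
    = B1 * (Y * X) * ((a * b) * (c * d * (e * g)) * (h * i * (j * k))) by intros; ring, hB']
  generalize (∏ j, f (x q - t j) / f (δ + s + t j)) = W1
  ring


theorem prod_sf_single (f : ℂ → ℂ) (δ : ℂ) (g : ι → ℂ) (q : ι) :
    ∏ i, sf f δ (g i) ((Pi.single q 1 : ι → ℕ) i) = f (g q) := by
  rw [Finset.prod_eq_single q]
  · simp [sf_one']
  · intro i _ hi; simp [hi, sf_zero']
  · simp

theorem R2_raise (f : ℂ → ℂ) (δ : ℂ) (α : ι → ℕ) (x : ι → ℂ) (s c0 c1 d0 d2 : ℂ)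
    (h : JG f δ x s c0 c1 d0 d2) :
    R2 f δ α x s c0 c1 d0 d2 = R2 f δ α x s c0 c1 d0 (d2 + δ)
      * ((∏ i, f (x i + s - d0 - d2 + α i * δ) * f (x i + s - d2)
            / (f (x i + s - d0 - d2) * f (x i + s - d2 + α i * δ)))
        * (f (s - c0 - d2 + (∑ i, α i : ℕ) * δ) * f (s - c1 - d2 + (∑ i, α i : ℕ) * δ)
            / (f (s - c0 - d2) * f (s - c1 - d2)))) := by
  unfold R2
  rw [mul_mul_mul_comm, ← Finset.prod_mul_distrib]
  congr 1
  · refine Finset.prod_congr rfl fun i _ => ?_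
    have e1 := sf_mul_last f δ (x i + s - d0 - d2) (α i)
    have e2 := sf_mul_last f δ (x i + s - d2) (α i)
    rw [show δ + s + x i - d0 - d2 = x i + s - d0 - d2 + δ by ring,
      show δ + s + x i - d2 = x i + s - d2 + δ by ring,
      show δ + s + x i - d0 - (d2 + δ) = x i + s - d0 - d2 by ring,
      show δ + s + x i - (d2 + δ) = x i + s - d2 by ring]
    have n1 := (h.h02 i).ne
    have n2 := (h.h2 i).ne
    have n3 := h.h2 i (α i)
    have n4 := ((h.h0 i).of (δ + s + x i - d0) 1 (by push_cast; ring)).sf (α i)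
    have n5 := (h.h2 i).sf (α i)
    have n6 := ((h.h2 i).of (x i + s - d2 + δ) 1 (by push_cast; ring)).sf (α i)
    push_cast at n3
    generalize sf f δ (x i + s - d0 - d2) (α i) = z1 at *
    generalize f (x i + s - d0 - d2 + α i * δ) = z2 at *
    generalize f (x i + s - d2 + α i * δ) = z3 at *
    field_simp
    linear_combination sf f δ (δ + s + x i) (α i) * (f (x i + s - d0 - d2)
      * sf f δ (x i + s - d0 - d2 + δ) (α i) * e2
      - f (x i + s - d2) * sf f δ (x i + s - d2 + δ) (α i) * e1)
  · have e1 := sf_mul_last f δ (s - c0 - d2) (∑ i, α i)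
    have e2 := sf_mul_last f δ (s - c1 - d2) (∑ i, α i)
    rw [show δ + s - c0 - d2 = s - c0 - d2 + δ by ring,
      show δ + s - c1 - d2 = s - c1 - d2 + δ by ring,
      show δ + s - c0 - (d2 + δ) = s - c0 - d2 by ring,
      show δ + s - c1 - (d2 + δ) = s - c1 - d2 by ring]
    have n1 := h.he0.ne
    have n2 := h.he1.ne
    have n4 := (h.hc0.of (δ + s - c0) 1 (by push_cast; ring)).sf (∑ i, α i)
    have n5 := (h.hc1.of (δ + s - c1) 1 (by push_cast; ring)).sf (∑ i, α i)
    generalize f (s - c0 - d2 + (∑ i, α i : ℕ) * δ) = z1 at *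
    generalize f (s - c1 - d2 + (∑ i, α i : ℕ) * δ) = z2 at *
    field_simp
    linear_combination -f (s - c1 - d2) * sf f δ (s - c1 - d2 + δ) (∑ i, α i) * e1
      - sf f δ (s - c0 - d2) (∑ i, α i) * z1 * e2

theorem R2_step (f : ℂ → ℂ) (δ : ℂ) (β : ι → ℕ) (j : ι) (x : ι → ℂ) (s c0 c1 d0 d2 Y : ℂ)
    (hY : Y = s + (x j + (β j + 1 : ℕ) * δ)) :
    R2 f δ (β + Pi.single j 1) x s c0 c1 d0 d2 = R2 f δ β x s c0 c1 d0 d2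
      * (f Y * f (Y - d0 - d2) / (f (Y - d0) * f (Y - d2))
        * (f (s - c0 - d2 + ((∑ i, β i) + 1 : ℕ) * δ) * f (s - c1 - d2 + ((∑ i, β i) + 1 : ℕ) * δ)
          / (f (s - c0 + ((∑ i, β i) + 1 : ℕ) * δ) * f (s - c1 + ((∑ i, β i) + 1 : ℕ) * δ)))) := by
  unfold R2
  rw [mul_mul_mul_comm]
  congr 1
  · simp only [Pi.add_apply, sf_add, Finset.prod_mul_distrib, Finset.prod_div_distrib,
      prod_sf_single]
    rw [show δ + s + x j + β j * δ = Y by rw [hY]; push_cast; ring,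
      show δ + s + x j - d0 - d2 + β j * δ = Y - d0 - d2 by rw [hY]; push_cast; ring,
      show δ + s + x j - d0 + β j * δ = Y - d0 by rw [hY]; push_cast; ring,
      show δ + s + x j - d2 + β j * δ = Y - d2 by rw [hY]; push_cast; ring]
    rw [div_mul_div_comm]
    congr 1 <;> ring
  · have e : ∑ i, (β + Pi.single j 1 : ι → ℕ) i = (∑ i, β i) + 1 := by
      simp [Finset.sum_add_distrib]
    simp only [e, sf_add, sf_one']
    rw [div_mul_div_comm]
    have h : ∀ z : ℂ, δ + s - z + (∑ i, β i : ℕ) * δ = s - z + ((∑ i, β i) + 1 : ℕ) * δ := by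
      intro z; push_cast; ring
    have h' : ∀ z : ℂ, δ + s - z - d2 + (∑ i, β i : ℕ) * δ
        = s - z - d2 + ((∑ i, β i) + 1 : ℕ) * δ := by
      intro z; push_cast; ring
    rw [h, h, h', h']
    congr 1 <;> ring

theorem R2_lower (f : ℂ → ℂ) (δ : ℂ) (β : ι → ℕ) (j : ι) (x : ι → ℂ) (s c0 c1 d0 d2 Y : ℂ)
    (h : JG f δ x s c0 c1 d0 d2) (hY : Y = s + (x j + (β j + 1 : ℕ) * δ)) :
    R2 f δ β x s c0 c1 d0 d2 = R2 f δ (β + Pi.single j 1) x s c0 c1 d0 (d2 + δ)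
      * ((∏ i, f (x i + s - d0 - d2 + (β + Pi.single j 1 : ι → ℕ) i * δ) * f (x i + s - d2)
            / (f (x i + s - d0 - d2) * f (x i + s - d2 + (β + Pi.single j 1 : ι → ℕ) i * δ)))
        * (f (s - c0 + ((∑ i, β i) + 1 : ℕ) * δ) * f (s - c1 + ((∑ i, β i) + 1 : ℕ) * δ)
            / (f (s - c0 - d2) * f (s - c1 - d2))))
      * (f (Y - d0) * f (Y - d2) / (f Y * f (Y - d0 - d2))) := by
  have e1 := R2_raise f δ (β + Pi.single j 1) x s c0 c1 d0 d2 h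
  have e2 := R2_step f δ β j x s c0 c1 d0 d2 Y hY
  have e : ∑ i, (β + Pi.single j 1 : ι → ℕ) i = (∑ i, β i) + 1 := by
    simp [Finset.sum_add_distrib]
  rw [e] at e1
  rw [e2] at e1
  have n1 := ((h.hs j).of Y (β j + 1) (by rw [hY]; push_cast; ring)).ne
  have n2 := ((h.h0 j).of (Y - d0) (β j + 1) (by rw [hY]; push_cast; ring)).ne
  have n3 := ((h.h2 j).of (Y - d2) (β j + 1) (by rw [hY]; push_cast; ring)).ne
  have n4 := ((h.h02 j).of (Y - d0 - d2) (β j + 1) (by rw [hY]; push_cast; ring)).ne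
  have n5 := h.hc0 ((∑ i, β i) + 1 : ℕ)
  have n6 := h.hc1 ((∑ i, β i) + 1 : ℕ)
  have n7 := h.he0 ((∑ i, β i) + 1 : ℕ)
  have n8 := h.he1 ((∑ i, β i) + 1 : ℕ)
  have n9 := h.he0.ne
  have n10 := h.he1.ne
  rw [Int.cast_natCast] at n5 n6 n7 n8
  generalize (∏ i, f (x i + s - d0 - d2 + (β + Pi.single j 1 : ι → ℕ) i * δ) * f (x i + s - d2)
    / (f (x i + s - d0 - d2) * f (x i + s - d2 + (β + Pi.single j 1 : ι → ℕ) i * δ))) = P at *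
  generalize f (s - c0 + ((∑ i, β i) + 1 : ℕ) * δ) = a1 at *
  generalize f (s - c1 + ((∑ i, β i) + 1 : ℕ) * δ) = a2 at *
  generalize f (s - c0 - d2 + ((∑ i, β i) + 1 : ℕ) * δ) = a3 at *
  generalize f (s - c1 - d2 + ((∑ i, β i) + 1 : ℕ) * δ) = a4 at *
  generalize f (s - c0 - d2) = a5 at *
  generalize f (s - c1 - d2) = a6 at *
  field_simp at e1 ⊢
  linear_combination e1

/-- The effect on the product side of raising `x_q`, `s`, `d₀`, `d₂`, compared with the value for
`α = β + e_q` and `d₂` raised. -/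
theorem R2_shift (f : ℂ → ℂ) (δ : ℂ) (β : ι → ℕ) (q : ι) (x : ι → ℂ) (s c0 c1 d0 d2 : ℂ)
    (h : JG f δ x s c0 c1 d0 d2) :
    R2 f δ β (fun i => x i + (Pi.single q 1 : ι → ℕ) i * δ) (s + δ) c0 c1 (d0 + δ) (d2 + δ)
      = R2 f δ (β + Pi.single q 1) x s c0 c1 d0 (d2 + δ)
      * ((∏ i, f (δ + s + (x i + (β + Pi.single q 1 : ι → ℕ) i * δ)) * f (x i + s - d2)
            / (f (x i + s + δ) * f (x i + s - d2 + (β + Pi.single q 1 : ι → ℕ) i * δ)))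
        * (f (x q + δ + s - d0) * f (x q + δ + s - d2)
            / (f (x q + s + 2 * δ) * f (x q + s - d0 - d2)))
        * (f (δ + s - c0) * f (δ + s - c1) / (f (s - c0 - d2) * f (s - c1 - d2)))) := by
  have e : ∑ i, (β + Pi.single q 1 : ι → ℕ) i = 1 + (∑ i, β i) := by
    simp [Finset.sum_add_distrib, add_comm]
  unfold R2
  rw [mul_mul_mul_comm]
  congr 1
  · have key : ∀ i, sf f δ (δ + (s + δ) + (x i + (Pi.single q 1 : ι → ℕ) i * δ)) (β i)
          * sf f δ (δ + (s + δ) + (x i + (Pi.single q 1 : ι → ℕ) i * δ) - (d0 + δ) - (d2 + δ)) (β i)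
          / (sf f δ (δ + (s + δ) + (x i + (Pi.single q 1 : ι → ℕ) i * δ) - (d0 + δ)) (β i)
            * sf f δ (δ + (s + δ) + (x i + (Pi.single q 1 : ι → ℕ) i * δ) - (d2 + δ)) (β i))
        = sf f δ (δ + s + x i) ((β + Pi.single q 1 : ι → ℕ) i)
          * sf f δ (δ + s + x i - d0 - (d2 + δ)) ((β + Pi.single q 1 : ι → ℕ) i)
          / (sf f δ (δ + s + x i - d0) ((β + Pi.single q 1 : ι → ℕ) i)
            * sf f δ (δ + s + x i - (d2 + δ)) ((β + Pi.single q 1 : ι → ℕ) i))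
          * (f (δ + s + (x i + (β + Pi.single q 1 : ι → ℕ) i * δ)) * f (x i + s - d2)
            / (f (x i + s + δ) * f (x i + s - d2 + (β + Pi.single q 1 : ι → ℕ) i * δ)))
          * (sf f δ (x i + δ + s - d0) ((Pi.single q 1 : ι → ℕ) i)
            * sf f δ (x i + δ + s - d2) ((Pi.single q 1 : ι → ℕ) i)
            / (sf f δ (x i + s + 2 * δ) ((Pi.single q 1 : ι → ℕ) i)
              * sf f δ (x i + s - d0 - d2) ((Pi.single q 1 : ι → ℕ) i))) := by
      intro i
      rw [Pi.add_apply]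
      generalize (Pi.single q 1 : ι → ℕ) i = ε
      generalize β i = b
      have a1 : sf f δ (x i + s + δ) (1 + ε + b) = f (x i + s + δ) * sf f δ (x i + s + 2 * δ) ε
          * sf f δ (δ + (s + δ) + (x i + ε * δ)) b := by
        rw [sf_add, sf_add, sf_one']
        congr 2
        · congr 1; push_cast; ring
        · push_cast; ring
      have a2 : sf f δ (x i + s + δ) (1 + ε + b) = sf f δ (δ + s + x i) (b + ε)
          * f (δ + s + (x i + (b + ε : ℕ) * δ)) := by
        rw [show 1 + ε + b = b + ε + 1 by ring, sf_add, sf_one']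
        congr 2 <;> ring
      have b1 : sf f δ (δ + s + x i - d0 - (d2 + δ)) (b + ε) = sf f δ (x i + s - d0 - d2) ε
          * sf f δ (δ + (s + δ) + (x i + ε * δ) - (d0 + δ) - (d2 + δ)) b := by
        rw [add_comm b, sf_add]
        congr 2 <;> ring
      have b2 : sf f δ (δ + s + x i - d0) (b + ε) = sf f δ (x i + δ + s - d0) ε
          * sf f δ (δ + (s + δ) + (x i + ε * δ) - (d0 + δ)) b := by
        rw [add_comm b, sf_add]
        congr 2 <;> ring
      have b3 : sf f δ (x i + δ + s - d2) (b + ε) = sf f δ (x i + δ + s - d2) ε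
          * sf f δ (δ + (s + δ) + (x i + ε * δ) - (d2 + δ)) b := by
        rw [add_comm b, sf_add]
        congr 2 <;> ring
      have b4 := sf_mul_last f δ (x i + s - d2) (b + ε)
      rw [show x i + s - d2 + δ = x i + δ + s - d2 by ring, b3] at b4
      rw [show δ + s + x i - (d2 + δ) = x i + s - d2 by ring, b1, b2]
      have n1 := ((h.hs i).of (x i + s + δ) 1 (by push_cast; ring)).ne
      have n2 := ((h.hs i).of (x i + s + 2 * δ) 2 (by push_cast; ring)).sf ε
      have n3 := (h.h02 i).sf ε
      have n4 := ((h.h0 i).of (x i + δ + s - d0) 1 (by push_cast; ring)).sf ε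
      have n5 := ((h.h0 i).of (δ + (s + δ) + (x i + ε * δ) - (d0 + δ)) (ε + 1)
        (by push_cast; ring)).sf b
      have n6 := ((h.h2 i).of (δ + (s + δ) + (x i + ε * δ) - (d2 + δ)) (ε + 1)
        (by push_cast; ring)).sf b
      have n7 := (h.h2 i).sf (b + ε)
      have n8 := h.h2 i (b + ε : ℕ)
      rw [Int.cast_natCast] at n8
      have a3 := a1.symm.trans a2
      generalize f (x i + s - d2 + (b + ε : ℕ) * δ) = z1 at *
      generalize f (δ + s + (x i + (b + ε : ℕ) * δ)) = z2 at *
      generalize sf f δ (δ + (s + δ) + (x i + ε * δ) - (d0 + δ)) b = z3 at *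
      generalize sf f δ (δ + (s + δ) + (x i + ε * δ) - (d2 + δ)) b = z4 at *
      generalize sf f δ (δ + (s + δ) + (x i + ε * δ) - (d0 + δ) - (d2 + δ)) b = z5 at *
      generalize sf f δ (δ + (s + δ) + (x i + ε * δ)) b = z6 at *
      generalize sf f δ (x i + s - d2) (b + ε) = z7 at *
      generalize sf f δ (δ + s + x i) (b + ε) = z8 at *
      generalize sf f δ (x i + δ + s - d0) ε = z9 at *
      generalize sf f δ (x i + δ + s - d2) ε = z10 at *
      generalize sf f δ (x i + s - d0 - d2) ε = z11 at *
      generalize sf f δ (x i + s + 2 * δ) ε = z12 at *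
      generalize f (x i + s + δ) = z13 at *
      generalize f (x i + s - d2) = z14 at *
      have hz : z6 * (z7 * z1) * (z13 * z12) = z8 * z2 * (z14 * (z10 * z4)) := by
        rw [← b4, ← a3]; ring
      field_simp
      linear_combination z5 * hz
    rw [Finset.prod_congr rfl fun i _ => key i, Finset.prod_mul_distrib, Finset.prod_mul_distrib,
      mul_assoc]
    congr 2
    rw [Finset.prod_div_distrib, Finset.prod_mul_distrib, Finset.prod_mul_distrib]
    simp only [prod_sf_single]
  · rw [e]
    simp only [sf_add, sf_one', Nat.cast_one, one_mul]
    rw [show δ + s - c0 - (d2 + δ) = s - c0 - d2 by ring,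
      show δ + s - c1 - (d2 + δ) = s - c1 - d2 by ring,
      show δ + (s + δ) - c0 - (d2 + δ) = s - c0 - d2 + δ by ring,
      show δ + (s + δ) - c1 - (d2 + δ) = s - c1 - d2 + δ by ring,
      show δ + (s + δ) - c0 = δ + s - c0 + δ by ring,
      show δ + (s + δ) - c1 = δ + s - c1 + δ by ring]
    have n1 := h.he0.ne
    have n2 := h.he1.ne
    have n3 := (h.hc0.of (δ + s - c0) 1 (by push_cast; ring)).ne
    have n4 := (h.hc1.of (δ + s - c1) 1 (by push_cast; ring)).ne
    have n5 := (h.hc0.of (δ + s - c0 + δ) 2 (by push_cast; ring)).sf (∑ i, β i)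
    have n6 := (h.hc1.of (δ + s - c1 + δ) 2 (by push_cast; ring)).sf (∑ i, β i)
    field_simp


/-- The sum weighted by `Pt` at `τ = t_j`, evaluated by the Jackson summation for `α` lowered at `j`;
for `α_j = 0` both sides vanish because of the factor `Pt` at `μ = 0`. -/
theorem jackson_lower (f : ℂ → ℂ) (f0 : f 0 = 0) (δ : ℂ) (α : ι → ℕ) (x : ι → ℂ)
    (s c0 c1 d0 d2 : ℂ) (h : JG f δ x s c0 c1 d0 d2) (j : ι)
    (ih : ∀ β : ι → ℕ, α = β + Pi.single j 1 →
      ∑ μ ∈ Finset.Iic β, T2 f δ (top δ β x) x s c0 c1 d0 d2 μ = R2 f δ β x s c0 c1 d0 d2) :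
    ∑ μ ∈ Finset.Iic α, T2 f δ (top δ α x) x s c0 c1 d0 d2 μ * Pt f δ x s (top δ α x j) μ
      = Pt f δ x s (top δ α x j) 0 * (R2 f δ α x s c0 c1 d0 (d2 + δ)
      * ((∏ i, f (x i + s - d0 - d2 + α i * δ) * f (x i + s - d2)
            / (f (x i + s - d0 - d2) * f (x i + s - d2 + α i * δ)))
        * (f (s - c0 + (∑ i, α i : ℕ) * δ) * f (s - c1 + (∑ i, α i : ℕ) * δ)
            / (f (s - c0 - d2) * f (s - c1 - d2))))
      * (f (s + top δ α x j - d0) * f (s + top δ α x j - d2)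
          / (f (s + top δ α x j) * f (s + top δ α x j - d0 - d2)))) := by
  have hl : ∀ μ, T2 f δ (top δ α x) x s c0 c1 d0 d2 μ * Pt f δ x s (top δ α x j) μ
      = T2 f δ (Function.update (top δ α x) j (top δ α x j - δ)) x s c0 c1 d0 d2 μ
        * Pt f δ x s (top δ α x j) 0 := fun μ =>
    T2_lower f δ (top δ α x) x s c0 c1 d0 d2 μ j
      ((h.hs j).of _ (α j) (by unfold top; push_cast; ring))
  rw [Finset.sum_congr rfl fun μ _ => hl μ, ← Finset.sum_mul, mul_comm]
  by_cases hj : α j = 0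
  · have : Pt f δ x s (top δ α x j) 0 = 0 := by
      unfold Pt
      rw [Finset.prod_eq_zero (Finset.mem_univ j), mul_zero]
      rw [← f0]
      congr 1
      simp [top, hj]
    rw [this, zero_mul, zero_mul]
  · obtain ⟨β, hβ⟩ : ∃ β : ι → ℕ, α = β + Pi.single j 1 := by
      refine ⟨α - Pi.single j 1, (tsub_add_cancel_of_le ?_).symm⟩
      intro i
      by_cases hij : i = j
      · subst hij; simpa using Nat.one_le_iff_ne_zero.mpr hj
      · simp [hij]
    have hu : Function.update (top δ α x) j (top δ α x j - δ) = top δ β x := by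
      funext i
      by_cases hij : i = j
      · subst hij; simp [top, hβ]; ring
      · simp [hij, top, hβ]
    have hle : β ≤ α := by rw [hβ]; exact le_self_add
    have hsum : ∑ i, α i = (∑ i, β i) + 1 := by
      rw [hβ]; simp [Finset.sum_add_distrib]
    rw [hu, T2_sum_ext f f0 δ β α x s c0 c1 d0 d2 hle, ih β hβ,
      R2_lower f δ β j x s c0 c1 d0 d2 (s + top δ α x j) h (by simp [top, hβ]), ← hβ, hsum]

/-- The sum weighted by `Pt` at `τ = x_q`: the terms with `μ_q = 0` drop out and the others form
a Jackson sum for `α` lowered at `q`. -/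
theorem jackson_shift (f : ℂ → ℂ) (hodd : ∀ t : ℂ, f (-t) = -f t) (f0 : f 0 = 0) (δ : ℂ)
    (hδ : ∀ k : ℤ, k ≠ 0 → f ((k : ℂ) * δ) ≠ 0) (α β : ι → ℕ) (x : ι → ℂ)
    (s c0 c1 d0 d2 : ℂ) (h : JG f δ x s c0 c1 d0 d2) (q : ι) (hα : α = β + Pi.single q 1) :
    ∑ μ ∈ Finset.Iic α, T2 f δ (top δ α x) x s c0 c1 d0 d2 μ * Pt f δ x s (x q) μ
      = cst f δ (top δ α x) x s c0 c1 d0 d2 q * ∑ l ∈ Finset.Iic β,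
        T2 f δ (top δ β fun i => x i + (Pi.single q 1 : ι → ℕ) i * δ)
          (fun i => x i + (Pi.single q 1 : ι → ℕ) i * δ) (s + δ) c0 c1 (d0 + δ) (d2 + δ) l := by
  have ht : top δ β (fun i => x i + (Pi.single q 1 : ι → ℕ) i * δ) = top δ α x := by
    funext i
    simp only [top, hα, Pi.add_apply]
    push_cast
    ring
  rw [ht, Finset.mul_sum]
  simp only [← T2_shift f hodd δ hδ (top δ α x) x s c0 c1 d0 d2 q _ h.hx h.hs]
  have hm := Finset.sum_map (Finset.Iic β) (addLeftEmbedding (Pi.single q 1))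
    fun μ => T2 f δ (top δ α x) x s c0 c1 d0 d2 μ * Pt f δ x s (x q) μ
  simp only [addLeftEmbedding_apply] at hm
  rw [← hm]
  symm
  refine Finset.sum_subset (fun μ hμ => ?_) fun μ hμ hμ' => ?_
  · obtain ⟨l, hl, rfl⟩ := Finset.mem_map.mp hμ
    rw [Finset.mem_Iic] at hl ⊢
    rw [hα, addLeftEmbedding_apply, add_comm]
    exact add_le_add_left hl _
  · have hq : μ q = 0 := by
      by_contra hq
      apply hμ'
      refine Finset.mem_map.mpr ⟨μ - Pi.single q 1, ?_, ?_⟩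
      · rw [Finset.mem_Iic] at hμ ⊢
        exact tsub_le_iff_right.mpr (hα ▸ hμ)
      · rw [addLeftEmbedding_apply]
        refine add_tsub_cancel_of_le fun i => ?_
        by_cases hij : i = q
        · subst hij; simpa using Nat.one_le_iff_ne_zero.mpr hq
        · simp [hij]
    have : Pt f δ x s (x q) μ = 0 := by
      unfold Pt
      rw [Finset.prod_eq_zero (Finset.mem_univ q), mul_zero]
      rw [← f0]
      congr 1
      simp [hq]
    rw [this, mul_zero]

/-- The scalar identity left over in the induction step of the Jackson summation. -/
theorem riemann_step (f : ℂ → ℂ) (hodd : ∀ t : ℂ, f (-t) = -f t)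
    (hRiem : ∀ x y u v : ℂ,
      f (x + y) * f (x - y) * f (u + v) * f (u - v) =
        f (x + u) * f (x - u) * f (y + v) * f (y - v)
          - f (x + v) * f (x - v) * f (y + u) * f (y - u))
    (s X N c0 c1 d0 d2 : ℂ) (hb : c0 + c1 + d0 + d2 = 2 * s + N) :
    f (X + s + N) * f (X + s - d0 - d2) * (f (s - c0 - d2) * f (s - c1 - d2))
      + f (N + d2) * f d0 * (f (X + c0) * f (X + c1))
      - f (X + s - d2) * f (X + s + N - d0) * (f (s - c0 + N) * f (s - c1 + N)) = 0 := by
  have key := hRiem ((2 * (X + s) + N - d0 - d2) / 2) ((d0 - d2 - N) / 2) ((d0 + d2 + N) / 2)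
    ((c1 - c0) / 2)
  obtain rfl : s = (c0 + c1 + d0 + d2 - N) / 2 := by linear_combination -hb / 2
  rw [show (2 * (X + (c0 + c1 + d0 + d2 - N) / 2) + N - d0 - d2) / 2 + (d0 - d2 - N) / 2
      = X + (c0 + c1 + d0 + d2 - N) / 2 - d2 by ring,
    show (2 * (X + (c0 + c1 + d0 + d2 - N) / 2) + N - d0 - d2) / 2 - (d0 - d2 - N) / 2
      = X + (c0 + c1 + d0 + d2 - N) / 2 + N - d0 by ring,
    show (d0 + d2 + N) / 2 + (c1 - c0) / 2 = (c0 + c1 + d0 + d2 - N) / 2 - c0 + N by ring,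
    show (d0 + d2 + N) / 2 - (c1 - c0) / 2 = (c0 + c1 + d0 + d2 - N) / 2 - c1 + N by ring,
    show (2 * (X + (c0 + c1 + d0 + d2 - N) / 2) + N - d0 - d2) / 2 + (d0 + d2 + N) / 2
      = X + (c0 + c1 + d0 + d2 - N) / 2 + N by ring,
    show (2 * (X + (c0 + c1 + d0 + d2 - N) / 2) + N - d0 - d2) / 2 - (d0 + d2 + N) / 2
      = X + (c0 + c1 + d0 + d2 - N) / 2 - d0 - d2 by ring,
    show (d0 - d2 - N) / 2 + (c1 - c0) / 2 = (c0 + c1 + d0 + d2 - N) / 2 - c0 - d2 by ring,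
    show (d0 - d2 - N) / 2 - (c1 - c0) / 2 = (c0 + c1 + d0 + d2 - N) / 2 - c1 - d2 by ring,
    show (2 * (X + (c0 + c1 + d0 + d2 - N) / 2) + N - d0 - d2) / 2 + (c1 - c0) / 2
      = X + c1 by ring,
    show (2 * (X + (c0 + c1 + d0 + d2 - N) / 2) + N - d0 - d2) / 2 - (c1 - c0) / 2
      = X + c0 by ring,
    show (d0 - d2 - N) / 2 + (d0 + d2 + N) / 2 = d0 by ring,
    show (d0 - d2 - N) / 2 - (d0 + d2 + N) / 2 = -(N + d2) by ring, hodd (N + d2)] at key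
  linear_combination -key

/-- The multiple Jackson summation.  Induction on `|α|`: partial fractions in the variables
`z₀ = -s - |μ|δ`, `z_i = x_i + μ_iδ` relate the sum to sums over smaller `α`. -/
theorem jackson (f : ℂ → ℂ) (hodd : ∀ t : ℂ, f (-t) = -f t)
    (hcont : Continuous f) (hdense : ∀ c : ℂ, Dense {ε : ℂ | f (c + ε) ≠ 0})
    (hRiem : ∀ x y u v : ℂ,
      f (x + y) * f (x - y) * f (u + v) * f (u - v) =
        f (x + u) * f (x - u) * f (y + v) * f (y - v)
          - f (x + v) * f (x - v) * f (y + u) * f (y - u))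
    (δ : ℂ) (hδ : ∀ k : ℤ, k ≠ 0 → f ((k : ℂ) * δ) ≠ 0) (n : ℕ) :
    ∀ (α : ι → ℕ) (x : ι → ℂ) (s c0 c1 d0 d2 : ℂ), ∑ i, α i = n →
      c0 + c1 + d0 + d2 = δ + 2 * s + n * δ → JG f δ x s c0 c1 d0 d2 →
      ∑ μ ∈ Finset.Iic α, T2 f δ (top δ α x) x s c0 c1 d0 d2 μ = R2 f δ α x s c0 c1 d0 d2 := by
  have f0 : f 0 = 0 := by
    have := hodd 0
    rw [neg_zero] at this
    linear_combination this / 2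
  induction n with
  | zero =>
    intro α x s c0 c1 d0 d2 hα _ h
    obtain rfl : α = 0 := by
      funext i
      simpa using (Finset.sum_eq_zero_iff.mp hα) i (Finset.mem_univ i)
    have h0 : Finset.Iic (0 : ι → ℕ) = {0} := by
      ext μ; simp
    rw [h0, Finset.sum_singleton]
    have : ∀ i, f (x i + s) ≠ 0 := fun i => (h.hs i).ne
    simp [T2, R2, Bs, Uf, Vf, sf_zero', div_self (this _)]
  | succ N ih =>
    intro α x s c0 c1 d0 d2' hα hbal h'
    obtain ⟨d2, rfl⟩ : ∃ d2, d2' = d2 + δ := ⟨d2' - δ, by ring⟩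
    -- The sum is reached from the one with `d₂` lowered by `δ`.
    have h : JG f δ x s c0 c1 d0 d2 :=
      h'.shift 0 0 0 (-1) (by simp) (by simp) (by simp) (by push_cast; ring)
    obtain ⟨q, hq⟩ : ∃ q, α q ≠ 0 := by
      by_contra hne
      push Not at hne
      simp [hne] at hα
    obtain ⟨β, hβ⟩ : ∃ β : ι → ℕ, α = β + Pi.single q 1 := by
      refine ⟨α - Pi.single q 1, (tsub_add_cancel_of_le ?_).symm⟩
      intro i
      by_cases hij : i = q
      · subst hij; simpa using Nat.one_le_iff_ne_zero.mpr hq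
      · simp [hij]
    have hsum1 : ∀ (j : ι) (γ : ι → ℕ), α = γ + Pi.single j 1 → ∑ i, γ i = N := by
      intro j γ hγ
      rw [hγ] at hα
      simpa [Finset.sum_add_distrib] using hα
    push_cast at hbal
    have hlow := fun j => jackson_lower f f0 δ α x s c0 c1 d0 d2 h j fun γ hγ =>
      ih γ x s c0 c1 d0 d2 (hsum1 j γ hγ) (by linear_combination hbal) h
    have hshift := jackson_shift f hodd f0 δ hδ α β x s c0 c1 d0 d2 h q hβ
    rw [ih β _ (s + δ) c0 c1 (d0 + δ) (d2 + δ) (hsum1 q β hβ) (by linear_combination hbal)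
      (h.shift (Pi.single q 1) 1 1 1 (fun _ => rfl) (by simp) (by simp) (by simp)),
      R2_shift f δ β q x s c0 c1 d0 d2 h, ← hβ] at hshift
    have hraise : ∑ μ ∈ Finset.Iic α, T2 f δ (top δ α x) x s c0 c1 d0 d2 μ * Pt f δ x s (d2 - s) μ
        = (∑ μ ∈ Finset.Iic α, T2 f δ (top δ α x) x s c0 c1 d0 (d2 + δ) μ)
          * Pt f δ x s (d2 - s) 0 := by
      rw [Finset.sum_mul]
      exact Finset.sum_congr rfl fun μ _ => T2_raise f δ _ x s c0 c1 d0 d2 μ h.h2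
    set t := top δ α x with ht_def
    have ht : ∀ i, t i = x i + α i * δ := fun i => rfl
    set y : ℂ := (N + 1 : ℕ) * δ + x q + d2 with hy
    have htt : ∀ i j, i ≠ j → f (t i - t j) ≠ 0 := fun i j hij =>
      ((h.hx i j hij).of _ (α i - α j) (by rw [ht, ht]; push_cast; ring)).ne
    have hσ : ∀ g : ι → ℂ, ∏ i, f (-(g i)) = (-1) ^ Fintype.card ι * ∏ i, f (g i) := by
      intro g
      rw [← Finset.card_univ, ← Finset.prod_const, ← Finset.prod_mul_distrib]
      exact Finset.prod_congr rfl fun i _ => by rw [hodd]; ring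
    have hst : ∑ i, t i = (∑ i, x i) + (N + 1 : ℕ) * δ := by
      simp only [ht, Finset.sum_add_distrib, ← Finset.sum_mul, ← hα]
      push_cast
      ring
    have nY2 : ∀ i, f (x i + s - d2 + α i * δ) ≠ 0 := fun i => by simpa using h.h2 i (α i)
    have nY02 : ∀ i, f (x i + s - d0 - d2 + α i * δ) ≠ 0 := fun i => by
      simpa using h.h02 i (α i)
    have nY : ∀ i, f (s + t i) ≠ 0 := fun i =>
      ((h.hs i).of _ (α i) (by rw [ht]; push_cast; ring)).ne
    have ntq : ∀ i, f (t i - x q) ≠ 0 := by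
      intro i
      by_cases hi : i = q
      · subst hi
        have := hδ (α i) (by exact_mod_cast hq)
        rw [ht]
        convert this using 2
        push_cast; ring
      · exact ((h.hx i q hi).of _ (α i) (by rw [ht]; push_cast; ring)).ne
    -- Partial fractions, applied to each summand.
    have hpf : ∀ μ : ι → ℕ,
        f ((d2 - s) - y) / (f ((d2 - s) - x q) * ∏ k, f ((d2 - s) - t k))
            * Pt f δ x s (d2 - s) μ
          + f (x q - y) / (f (x q - (d2 - s)) * ∏ k, f (x q - t k)) * Pt f δ x s (x q) μ
          + ∑ j, f (t j - y) / (f (t j - (d2 - s)) * f (t j - x q)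
              * ∏ k, (if k = j then 1 else f (t j - t k))) * Pt f δ x s (t j) μ = 0 := by
      intro μ
      have := partial_fractions_two f hodd hcont hdense hRiem t (fun i => x i + μ i * δ) (x q)
        (d2 - s) y (-(s + (∑ i, μ i : ℕ) * δ))
        (by
          rw [hst, hy, Finset.sum_add_distrib, ← Finset.sum_mul]
          push_cast
          ring)
        htt (fun i => by
          have := nY2 i
          rwa [show x i + s - d2 + α i * δ = t i - (d2 - s) by rw [ht]; ring] at this) ntq
        (((h.h2 q).of _ 0 (by push_cast; ring)).ne)
      have hP : ∀ τ : ℂ, f (τ - -(s + (∑ i, μ i : ℕ) * δ)) * ∏ i, f (x i + μ i * δ - τ)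
          = Pt f δ x s τ μ := by
        intro τ
        unfold Pt
        congr 2
        ring
      simp only [hP] at this
      rw [← this]
      congr 1
      · congr 1 <;> exact div_mul_eq_mul_div _ _ _
      · exact Finset.sum_congr rfl fun j _ => div_mul_eq_mul_div _ _ _
    have hS : f ((d2 - s) - y) / (f ((d2 - s) - x q) * ∏ k, f ((d2 - s) - t k))
            * (∑ μ ∈ Finset.Iic α, T2 f δ t x s c0 c1 d0 d2 μ * Pt f δ x s (d2 - s) μ)
          + f (x q - y) / (f (x q - (d2 - s)) * ∏ k, f (x q - t k))
            * (∑ μ ∈ Finset.Iic α, T2 f δ t x s c0 c1 d0 d2 μ * Pt f δ x s (x q) μ)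
          + ∑ j, f (t j - y) / (f (t j - (d2 - s)) * f (t j - x q)
              * ∏ k, (if k = j then 1 else f (t j - t k)))
            * (∑ μ ∈ Finset.Iic α, T2 f δ t x s c0 c1 d0 d2 μ * Pt f δ x s (t j) μ) = 0 := by
      simp only [Finset.mul_sum]
      rw [Finset.sum_comm, ← Finset.sum_add_distrib, ← Finset.sum_add_distrib]
      refine Finset.sum_eq_zero fun μ _ => ?_
      have := congrArg (fun z => T2 f δ t x s c0 c1 d0 d2 μ * z) (hpf μ)
      simp only [mul_add, mul_zero, Finset.mul_sum] at this
      rw [← this]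
      congr 1
      · congr 1 <;> ring
      · exact Finset.sum_congr rfl fun j _ => by ring
    rw [hraise, hshift] at hS
    simp only [hlow] at hS
    rw [hα] at hS
    generalize ∑ μ ∈ Finset.Iic α, T2 f δ t x s c0 c1 d0 (d2 + δ) μ = S at *
    generalize R2 f δ α x s c0 c1 d0 (d2 + δ) = R at *
    clear ih hlow hraise hshift hpf
    have hbal' : c0 + c1 + d0 + d2 = 2 * s + (N + 1 : ℕ) * δ := by
      push_cast; linear_combination hbal
    have nn : f (x q + s + (N + 1 : ℕ) * δ) ≠ 0 := by
      have := h.hs q (N + 1 : ℕ)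
      rwa [Int.cast_natCast] at this
    generalize ((N + 1 : ℕ) : ℂ) * δ = n at *
    have hriem := riemann_step f hodd hRiem s (x q) n c0 c1 d0 d2 hbal'
    have nq2 := (h.h2 q).ne
    have nq02 := (h.h02 q).ne
    -- The sum over `j` is again evaluated by partial fractions.
    have hone := partial_fractions_one f hodd hcont hdense hRiem t x q (d0 + d2 - s) y (d0 - s)
      (by
        rw [hst, hy, ← Finset.add_sum_erase Finset.univ x (Finset.mem_univ q)]
        ring)
      htt (fun i => by
        have := nY02 i
        rwa [show x i + s - d0 - d2 + α i * δ = t i - (d0 + d2 - s) by rw [ht]; ring] at this)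
    have hj : ∀ j, ∀ K : ℂ, f (t j - y) / (f (t j - (d2 - s)) * f (t j - x q)
              * ∏ k, (if k = j then 1 else f (t j - t k)))
          * (Pt f δ x s (t j) 0 * (K * (f (s + t j - d0) * f (s + t j - d2)
              / (f (s + t j) * f (s + t j - d0 - d2)))))
        = -K * (f (t j - y) * f (t j - (d0 - s)) * (∏ i ∈ univ.erase q, f (x i - t j))
          / (f (t j - (d0 + d2 - s)) * ∏ k, (if k = j then 1 else f (t j - t k)))) := by
      intro j K
      have hP : Pt f δ x s (t j) 0
          = f (s + t j) * (-f (t j - x q) * ∏ i ∈ univ.erase q, f (x i - t j)) := by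
        unfold Pt
        rw [← Finset.mul_prod_erase Finset.univ _ (Finset.mem_univ q), ← hodd]
        congr 1
        · congr 1; simp; ring
        · congr 1
          · congr 1; simp
          · exact Finset.prod_congr rfl fun i _ => by simp
      have n1 := nY j
      have n2 := ntq j
      have n3 : ∏ k, (if k = j then 1 else f (t j - t k)) ≠ 0 :=
        Finset.prod_ne_zero_iff.mpr fun k _ => by
          split_ifs with hk
          · exact one_ne_zero
          · exact htt j k (Ne.symm hk)
      have n4 : f (s + t j - d2) ≠ 0 := by
        have := nY2 j
        rwa [show x j + s - d2 + α j * δ = s + t j - d2 by rw [ht]; ring] at this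
      have n5 : f (s + t j - d0 - d2) ≠ 0 := by
        have := nY02 j
        rwa [show x j + s - d0 - d2 + α j * δ = s + t j - d0 - d2 by rw [ht]; ring] at this
      rw [hP, show t j - (d2 - s) = s + t j - d2 by ring,
        show t j - (d0 + d2 - s) = s + t j - d0 - d2 by ring,
        show t j - (d0 - s) = s + t j - d0 by ring]
      field_simp
    rw [Finset.sum_congr rfl fun j _ => hj j _, ← Finset.mul_sum,
      eq_neg_of_add_eq_zero_right hone] at hS
    clear hj hone
    have E1 : Pt f δ x s (d2 - s) 0 = f d2 * ∏ i, f (x i + s - d2) := by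
      unfold Pt
      congr 1
      · congr 1; simp
      · exact Finset.prod_congr rfl fun i _ => by congr 1; simp; ring
    have E2 : ∏ k, f (d2 - s - t k)
        = (-1) ^ Fintype.card ι * ∏ i, f (x i + s - d2 + α i * δ) := by
      rw [← hσ]
      exact Finset.prod_congr rfl fun i _ => by congr 1; rw [ht]; ring
    have E3 : ∏ k, f (d0 + d2 - s - t k)
        = (-1) ^ Fintype.card ι * ∏ i, f (x i + s - d0 - d2 + α i * δ) := by
      rw [← hσ]
      exact Finset.prod_congr rfl fun i _ => by congr 1; rw [ht]; ring
    have E4 : (∏ i ∈ univ.erase q, f (x i - (d0 + d2 - s))) * f (x q + s - d0 - d2)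
        = ∏ i, f (x i + s - d0 - d2) := by
      rw [← Finset.prod_erase_mul Finset.univ (fun i => f (x i + s - d0 - d2)) (Finset.mem_univ q)]
      congr 1
      exact Finset.prod_congr rfl fun i _ => by congr 1; ring
    have E4' := eq_div_of_mul_eq nq02 E4
    have E5 : ∏ i, f (δ + s + (x i + α i * δ)) = ∏ j, f (δ + s + t j) := rfl
    have M1 : ∏ i, f (x i + s - d2) ≠ 0 := Finset.prod_ne_zero_iff.mpr fun i _ => (h.h2 i).ne
    have M2 : ∏ i, f (x i + s - d2 + α i * δ) ≠ 0 := Finset.prod_ne_zero_iff.mpr fun i _ => nY2 i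
    have M3 : ∏ i, f (x i + s - d0 - d2) ≠ 0 :=
      Finset.prod_ne_zero_iff.mpr fun i _ => (h.h02 i).ne
    have M4 : ∏ i, f (x i + s - d0 - d2 + α i * δ) ≠ 0 :=
      Finset.prod_ne_zero_iff.mpr fun i _ => nY02 i
    have M5 : ∏ j, f (δ + s + t j) ≠ 0 := Finset.prod_ne_zero_iff.mpr fun i _ =>
      ((h.hs i).of _ (α i + 1) (by rw [ht]; push_cast; ring)).ne
    have M6 : ∏ i, f (x i + s + δ) ≠ 0 := Finset.prod_ne_zero_iff.mpr fun i _ =>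
      ((h.hs i).of _ 1 (by push_cast; ring)).ne
    have M7 : ∏ j, f (x q - t j) ≠ 0 := Finset.prod_ne_zero_iff.mpr fun i _ => by
      rw [← neg_sub, hodd]; exact neg_ne_zero.mpr (ntq i)
    have n1 := ((h.h0 q).of (x q + δ + s - d0) 1 (by push_cast; ring)).ne
    have n2 := ((h.h2 q).of (x q + δ + s - d2) 1 (by push_cast; ring)).ne
    have n3 := ((h.hs q).of (x q + s + 2 * δ) 2 (by push_cast; ring)).ne
    have n4 := (h.hc0.of (δ + s - c0) 1 (by push_cast; ring)).ne
    have n5 := (h.hc1.of (δ + s - c1) 1 (by push_cast; ring)).ne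
    have n6 := h.he0.ne
    have n7 := h.he1.ne
    have n8 := h.hd2.ne
    have nσ : ((-1 : ℂ) ^ Fintype.card ι) ≠ 0 := pow_ne_zero _ (by norm_num)
    have hsq : ((-1 : ℂ) ^ Fintype.card ι) * (-1) ^ Fintype.card ι = 1 := by
      rw [← mul_pow]; simp
    unfold cst at hS
    simp only [Finset.prod_div_distrib, Finset.prod_mul_distrib] at hS
    rw [E1, E2, E3, E4', E5, pow_succ, show d2 - s - y = -(x q + s + n) by rw [hy]; ring,
      show d2 - s - x q = -(x q + s - d2) by ring, show x q - y = -(n + d2) by rw [hy]; ring,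
      show x q - (d2 - s) = x q + s - d2 by ring,
      show d0 + d2 - s - y = -(x q + s + n - d0) by rw [hy]; ring,
      show d0 + d2 - s - (d0 - s) = d2 by ring, hodd, hodd, hodd, hodd] at hS
    clear E1 E2 E3 E4 E4' E5 hst ntq nY nY02 nY2 htt hσ
    generalize (-1 : ℂ) ^ Fintype.card ι = σ at *
    generalize ∏ i, f (x i + s - d2 + α i * δ) = p1 at *
    generalize ∏ i, f (x i + s - d0 - d2 + α i * δ) = p2 at *
    generalize ∏ i, f (x i + s - d0 - d2) = p3 at *
    generalize ∏ i, f (x i + s - d2) = p4 at *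
    generalize ∏ i, f (x q - t i) = p5 at *
    generalize ∏ i, f (δ + s + t i) = p6 at *
    generalize ∏ i, f (x i + s + δ) = p7 at *
    generalize f (s - c0 + n) = u1 at *
    generalize f (s - c1 + n) = u2 at *
    generalize f (s - c0 - d2) = u3 at *
    generalize f (s - c1 - d2) = u4 at *
    generalize f (x q + s + n) = u5 at *
    generalize f (x q + s + n - d0) = u6 at *
    generalize f (x q + s - d2) = u7 at *
    generalize f (x q + s - d0 - d2) = u8 at *
    generalize f (x q + δ + s - d0) = u9 at *
    generalize f (x q + δ + s - d2) = u10 at *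
    generalize f (x q + s + 2 * δ) = u11 at *
    generalize f (δ + s - c0) = u12 at *
    generalize f (δ + s - c1) = u13 at *
    generalize f (x q + c0) = u14 at *
    generalize f (x q + c1) = u15 at *
    generalize f d0 = u16 at *
    generalize f d2 = u17 at *
    generalize f (n + d2) = u18 at *
    field_simp at hS
    have hne : u17 * p4 * (u5 * u8 * u3 * u4) ≠ 0 := by
      simp only [ne_eq, mul_eq_zero, not_or]
      exact ⟨⟨n8, M1⟩, ⟨⟨nn, nq02⟩, n6⟩, n7⟩
    refine mul_left_cancel₀ hne ?_
    linear_combination hS - u17 * p4 * R * hriem - u17 * p4 * u18 * u14 * u15 * u16 * R * hsq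

end jackson

/-! ### The Bailey transformation for generic parameters -/

section bailey

variable {ι : Type*} [Fintype ι]

/-- The summand of the very well-poised series with three upper and three lower parameters;
`t j` stands for `x j - a j`. -/
noncomputable def T3 (f : ℂ → ℂ) (δ : ℂ) (t x : ι → ℂ) (s c0 c1 c2 d0 d1 d2 : ℂ) (μ : ι → ℕ) : ℂ :=
  Bs f δ x s μ * (∏ j, Uf f δ x s (-t j) μ) * (Uf f δ x s c0 μ * Uf f δ x s c1 μ * Uf f δ x s c2 μ)
    * (Vf f δ x s d0 μ * Vf f δ x s d1 μ * Vf f δ x s d2 μ)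

/-- The product side of the inner Jackson summation. -/
theorem R2_inner (f : ℂ → ℂ) (hodd : ∀ t : ℂ, f (-t) = -f t) (δ : ℂ) (μ : ι → ℕ) (x : ι → ℂ)
    (s c2 d0 d1 st c2t d0t d1t : ℂ)
    (hst : st = δ + 2 * s - c2 - d0 - d1) (hc2t : c2t = δ + s - d0 - d1)
    (hd0t : d0t = δ + s - c2 - d1) (hd1t : d1t = δ + s - c2 - d0) :
    R2 f δ μ x st c2t (s + (∑ i, μ i : ℕ) * δ) d0t d1t
      = Uf f δ x s c2 μ * (Vf f δ x s d0 μ * Vf f δ x s d1 μ)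
        * ((∏ i, sf f δ (δ + st + x i) (μ i)) / sf f δ (s - st) (∑ i, μ i)) := by
  unfold R2 Uf Vf
  set N := ∑ i, μ i
  have r1 : sf f δ (δ + st - (s + (N : ℂ) * δ) - d1t) N = (-1) ^ N * sf f δ d1 N :=
    sf_reflect f hodd δ _ _ N (by rw [hst, hd1t]; ring)
  have r2 : sf f δ (δ + st - (s + (N : ℂ) * δ)) N = (-1) ^ N * sf f δ (s - st) N :=
    sf_reflect f hodd δ _ _ N (by ring)
  have nσ : ((-1 : ℂ) ^ N) ≠ 0 := pow_ne_zero _ (by norm_num)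
  rw [r1, r2, show δ + st - c2t - d1t = d0 by rw [hst, hc2t, hd1t]; ring,
    show δ + st - c2t = δ + s - c2 by rw [hst, hc2t]; ring]
  have p1 : ∀ i, δ + st + x i - d0t - d1t = x i + c2 := fun i => by
    rw [hst, hd0t, hd1t]; ring
  have p2 : ∀ i, δ + st + x i - d0t = x i + δ + s - d0 := fun i => by
    rw [hst, hd0t]; ring
  have p3 : ∀ i, δ + st + x i - d1t = x i + δ + s - d1 := fun i => by
    rw [hst, hd1t]; ring
  simp only [p1]
  simp only [p2, p3, Finset.prod_div_distrib, Finset.prod_mul_distrib]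
  generalize ∏ i, sf f δ (δ + st + x i) (μ i) = a1
  generalize ∏ i, sf f δ (x i + c2) (μ i) = a2
  generalize ∏ i, sf f δ (x i + δ + s - d0) (μ i) = a3
  generalize ∏ i, sf f δ (x i + δ + s - d1) (μ i) = a4
  generalize sf f δ (δ + s - c2) N = a5
  generalize sf f δ (s - st) N = a6
  generalize sf f δ d0 N = a7
  generalize sf f δ d1 N = a8
  generalize (-1 : ℂ) ^ N = σ at *
  rw [show a7 * (σ * a8) / (a5 * (σ * a6)) = a7 * a8 / (a5 * a6) by
    rw [mul_left_comm, mul_left_comm a5, mul_div_mul_left _ _ nσ]]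
  simp only [div_eq_mul_inv, mul_inv]
  ring

theorem sum_triangle [DecidableEq ι] (α : ι → ℕ) (F : (ι → ℕ) → (ι → ℕ) → ℂ) :
    ∑ μ ∈ Finset.Iic α, ∑ ν ∈ Finset.Iic μ, F μ ν
      = ∑ ν ∈ Finset.Iic α, ∑ l ∈ Finset.Iic (α - ν), F (ν + l) ν := by
  rw [Finset.sum_comm' (s' := fun ν => Finset.Icc ν α) (t' := Finset.Iic α)]
  · refine Finset.sum_congr rfl fun ν hν => ?_
    refine Finset.sum_nbij' (fun μ => μ - ν) (fun l => ν + l) ?_ ?_ ?_ ?_ ?_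
    · intro μ hμ
      rw [Finset.mem_Icc] at hμ
      exact Finset.mem_Iic.mpr (tsub_le_tsub_right hμ.2 ν)
    · intro l hl
      rw [Finset.mem_Iic] at hl hν
      refine Finset.mem_Icc.mpr ⟨le_self_add, ?_⟩
      calc ν + l ≤ ν + (α - ν) := add_le_add_right hl ν
        _ = α := add_tsub_cancel_of_le hν
    · intro μ hμ
      exact add_tsub_cancel_of_le (Finset.mem_Icc.mp hμ).1
    · intro l _
      exact add_tsub_cancel_left ν l
    · intro μ hμ
      rw [add_tsub_cancel_of_le (Finset.mem_Icc.mp hμ).1]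
  · intro μ ν
    simp only [Finset.mem_Iic, Finset.mem_Icc]
    exact ⟨fun h => ⟨⟨h.2, h.1⟩, h.2.trans h.1⟩, fun h => ⟨h.1.2, h.1.1⟩⟩

/-- The factor of the double sum that does not depend on the inner summation index. -/
noncomputable def Kf (f : ℂ → ℂ) (δ : ℂ) (t x : ι → ℂ) (s c0 c1 d2 st c2t d0t d1t : ℂ)
    (ν : ι → ℕ) : ℂ :=
  Bs f δ x st ν * (Uf f δ x st c2t ν * (Vf f δ x st d0t ν * Vf f δ x st d1t ν))
    * (∏ j, Uf f δ x s (-t j) ν) * (Uf f δ x s c0 ν * Uf f δ x s c1 ν * Vf f δ x s d2 ν)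
    * ((∏ i, sf f δ (x i + s + δ) ((∑ j, ν j) + ν i))
      / ∏ i, sf f δ (x i + st + δ) ((∑ j, ν j) + ν i))

/-- The double summand as a function of `l` is a constant times a Jackson summand. -/
theorem double_summand (f : ℂ → ℂ) (hodd : ∀ t : ℂ, f (-t) = -f t) (δ : ℂ)
    (hδ : ∀ k : ℤ, k ≠ 0 → f ((k : ℂ) * δ) ≠ 0) (t x : ι → ℂ)
    (s c0 c1 d2 st c2t d0t d1t : ℂ) (ν l : ι → ℕ)
    (hx : ∀ i j, i ≠ j → NZ f δ (x i - x j)) (hs : ∀ i, NZ f δ (x i + s))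
    (hss : NZ f δ (s - st)) :
    Bs f δ x s (ν + l) * (∏ j, Uf f δ x s (-t j) (ν + l))
        * (Uf f δ x s c0 (ν + l) * Uf f δ x s c1 (ν + l) * Vf f δ x s d2 (ν + l))
        * (sf f δ (s - st) (∑ i, (ν + l) i) / ∏ i, sf f δ (δ + st + x i) ((ν + l) i))
        * T2 f δ (top δ (ν + l) x) x st c2t (s + (∑ i, (ν + l) i : ℕ) * δ) d0t d1t ν
      = Kf f δ t x s c0 c1 d2 st c2t d0t d1t ν
        * T2 f δ t (fun i => x i + ν i * δ) (s + (∑ i, ν i : ℕ) * δ) c0 c1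
          (d2 + (∑ i, ν i : ℕ) * δ) (s - st) l := by
  have hB := Bs_add f δ hδ x s ν l hx hs
  unfold T2 Kf
  rw [Vf_add, Uf_add, Uf_add]
  simp only [Uf_add, Finset.prod_mul_distrib]
  have u1 : ∏ j, Uf f δ x st (-top δ (ν + l) x j) ν
      = (∏ i, ∏ j, sf f δ (x i - x j - (ν j + l j : ℕ) * δ) (ν i))
        / ∏ i, sf f δ (δ + st + x i + (ν i + l i : ℕ) * δ) (∑ i, ν i) := by
    unfold Uf
    rw [Finset.prod_div_distrib, Finset.prod_comm]
    congr 1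
    · refine Finset.prod_congr rfl fun i _ => Finset.prod_congr rfl fun j _ => ?_
      congr 1
      simp only [top, Pi.add_apply]
      ring
    · refine Finset.prod_congr rfl fun j _ => ?_
      congr 1
      simp only [top, Pi.add_apply]
      ring
  set N := ∑ i, ν i with hN
  set M := ∑ i, l i with hM
  have hNM : ∑ i, (ν + l) i = M + N := by
    simp only [Pi.add_apply, Finset.sum_add_distrib]; exact add_comm _ _
  have hNM' : ∑ i, (ν i + l i) = M + N := hNM
  have u2 : Uf f δ x st (s + (M + N : ℕ) * δ) ν
      = (∏ i, sf f δ (x i + s + (M + N : ℕ) * δ) (ν i))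
        / sf f δ (δ + st - (s + (M + N : ℕ) * δ)) N := by
    unfold Uf
    congr 1
    exact Finset.prod_congr rfl fun i _ => by rw [add_assoc (x i)]
  have r1 : sf f δ (δ + st - (s + (M + N : ℕ) * δ)) N
      = (-1) ^ N * sf f δ (s - st + M * δ) N :=
    sf_reflect f hodd δ _ _ N (by push_cast; ring)
  have r2 : ∏ i, (sf f δ (δ + st + x i) ((ν + l) i)
        * sf f δ (δ + st + x i + (ν i + l i : ℕ) * δ) N)
      = ∏ i, (sf f δ (x i + st + δ) (N + ν i)
        * sf f δ (x i + ν i * δ + δ + (s + N * δ) - (s - st)) (l i)) := by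
    refine Finset.prod_congr rfl fun i _ => ?_
    have e1 := sf_add f δ (δ + st + x i) (ν i + l i) N
    have e2 := sf_add f δ (x i + st + δ) (N + ν i) (l i)
    rw [Pi.add_apply, ← e1,
      show x i + ν i * δ + δ + (s + N * δ) - (s - st) = x i + st + δ + (N + ν i : ℕ) * δ by
        push_cast; ring, ← e2]
    congr 1
    · ring
    · ring
  rw [Finset.prod_mul_distrib, Finset.prod_mul_distrib] at r2
  have v1 : Vf f δ (fun i => x i + ν i * δ) (s + N * δ) (s - st) l
      = sf f δ (s - st) M
        / ∏ i, sf f δ (x i + ν i * δ + δ + (s + N * δ) - (s - st)) (l i) := rfl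
  rw [hNM'] at hB
  rw [hNM, u1, u2, r1, v1, sf_add f δ (s - st) M N]
  have n1 : sf f δ (s - st + M * δ) N ≠ 0 := (hss.of _ M (by push_cast; ring)).sf N
  have nσ : ((-1 : ℂ) ^ N) ≠ 0 := pow_ne_zero _ (by norm_num)
  have hsq : ((-1 : ℂ) ^ N) * (-1) ^ N = 1 := by
    rw [← mul_pow]; simp
  have hinv : (∏ i, sf f δ (δ + st + x i) ((ν + l) i))⁻¹
        * (∏ i, sf f δ (δ + st + x i + (ν i + l i : ℕ) * δ) N)⁻¹
      = (∏ i, sf f δ (x i + st + δ) (N + ν i))⁻¹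
        * (∏ i, sf f δ (x i + ν i * δ + δ + (s + N * δ) - (s - st)) (l i))⁻¹ := by
    rw [← mul_inv, r2, mul_inv]
  have hcan : sf f δ (s - st + M * δ) N * ((-1) ^ N * sf f δ (s - st + M * δ) N)⁻¹ = (-1) ^ N := by
    rw [mul_inv, mul_left_comm, mul_inv_cancel₀ n1, mul_one]
    exact inv_eq_of_mul_eq_one_left hsq
  simp only [div_eq_mul_inv]
  generalize (∏ i, ∏ j, sf f δ (x i - x j - (ν j + l j : ℕ) * δ) (ν i)) = g1 at *
  generalize (∏ i, sf f δ (x i + s + (M + N : ℕ) * δ) (ν i)) = g2 at *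
  generalize (∏ i, sf f δ (δ + st + x i) ((ν + l) i))⁻¹ = g3 at *
  generalize (∏ i, sf f δ (δ + st + x i + (ν i + l i : ℕ) * δ) N)⁻¹ = g4 at *
  generalize (∏ i, sf f δ (x i + st + δ) (N + ν i))⁻¹ = g5 at *
  generalize (∏ i, sf f δ (x i + ν i * δ + δ + (s + N * δ) - (s - st)) (l i))⁻¹ = g6 at *
  generalize ((-1) ^ N * sf f δ (s - st + M * δ) N)⁻¹ = g7 at *
  generalize sf f δ (s - st + M * δ) N = g8 at *
  generalize sf f δ (s - st) M = g9 at *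
  generalize (∏ i, sf f δ (x i + s + δ) (N + ν i)) = g10 at *
  generalize (-1 : ℂ) ^ N = σ at *
  generalize Bs f δ x s (ν + l) = b1 at *
  generalize Bs f δ (fun i => x i + ν i * δ) (s + N * δ) l = b2 at *
  generalize Bs f δ x st ν = b3 at *
  generalize (∏ j, Uf f δ x s (-t j) ν) = w1
  generalize (∏ j, Uf f δ (fun i => x i + ν i * δ) (s + N * δ) (-t j) l) = w2
  generalize Uf f δ (fun i => x i + ν i * δ) (s + N * δ) c0 l = w3
  generalize Uf f δ (fun i => x i + ν i * δ) (s + N * δ) c1 l = w4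
  generalize Vf f δ (fun i => x i + ν i * δ) (s + N * δ) (d2 + N * δ) l = w5
  generalize Uf f δ x s c0 ν = w6
  generalize Uf f δ x s c1 ν = w7
  generalize Vf f δ x s d2 ν = w8
  generalize Uf f δ x st c2t ν = w9
  generalize Vf f δ x st d0t ν = w10
  generalize Vf f δ x st d1t ν = w11
  have hz : b1 * (g1 * g2) * (g3 * g4) * (g8 * g7) = b2 * g10 * (g5 * g6) := by
    rw [hB, hinv, hcan]
    linear_combination b2 * g10 * g5 * g6 * hsq
  linear_combination w1 * w2 * w3 * w4 * w5 * w6 * w7 * w8 * w9 * w10 * w11 * b3 * g9 * hz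

/-- The constant in the Bailey transformation, in reciprocal form. -/
noncomputable def Qf (f : ℂ → ℂ) (δ : ℂ) (α : ι → ℕ) (x : ι → ℂ) (s c0 c1 d2 st : ℂ) : ℂ :=
  (sf f δ (δ + st - c0) (∑ i, α i) * sf f δ (δ + st - c1) (∑ i, α i)
      / (sf f δ (δ + s - c0) (∑ i, α i) * sf f δ (δ + s - c1) (∑ i, α i)))
    * ∏ i, sf f δ (δ + s + x i) (α i) * sf f δ (δ + st + x i - d2) (α i)
      / (sf f δ (δ + s + x i - d2) (α i) * sf f δ (δ + st + x i) (α i))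

/-- After the second Jackson summation each outer term is a common constant times a summand of the
transformed series. -/
theorem Kf_mul_R2 (f : ℂ → ℂ) (δ : ℂ) (ν l : ι → ℕ) (x : ι → ℂ)
    (s c0 c1 d2 st c2t d0t d1t : ℂ)
    (hs : ∀ i, NZ f δ (x i + s)) (hc0 : NZ f δ (st - c0)) (hc1 : NZ f δ (st - c1))
    (h2 : ∀ i, NZ f δ (x i + st - d2)) :
    Kf f δ (top δ (ν + l) x) x s c0 c1 d2 st c2t d0t d1t ν
        * R2 f δ l (fun i => x i + ν i * δ) (s + (∑ i, ν i : ℕ) * δ) c0 c1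
          (d2 + (∑ i, ν i : ℕ) * δ) (s - st)
      = Qf f δ (ν + l) x s c0 c1 d2 st
        * T3 f δ (top δ (ν + l) x) x st c0 c1 c2t d0t d1t d2 ν := by
  unfold Kf R2 Qf T3
  set t := top δ (ν + l) x with ht
  have hsum : ∑ i, (ν + l) i = (∑ i, ν i) + ∑ i, l i := by
    simp [Finset.sum_add_distrib]
  rw [hsum]
  have u1 : ∀ s' : ℂ, ∏ j, Uf f δ x s' (-t j) ν
      = (∏ j, ∏ i, sf f δ (x i + -t j) (ν i)) / ∏ j, sf f δ (δ + s' - -t j) (∑ i, ν i) := by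
    intro s'
    unfold Uf
    rw [Finset.prod_div_distrib]
  rw [u1, u1]
  unfold Uf Vf
  set N := ∑ i, ν i with hN
  set M := ∑ i, l i with hM
  -- Concatenation of shifted factorials over the two summation indices.
  have e1 : ∀ s' : ℂ, (∏ i, sf f δ (x i + s' + δ) (N + ν i))
        * ∏ i, sf f δ (δ + s' + x i + (N + ν i) * δ) (l i)
      = (∏ i, sf f δ (δ + s' + x i) ((ν + l) i)) * ∏ j, sf f δ (δ + s' - -t j) N := by
    intro s'
    rw [← Finset.prod_mul_distrib, ← Finset.prod_mul_distrib]
    refine Finset.prod_congr rfl fun i _ => ?_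
    rw [show δ + s' + x i + (N + ν i) * δ = x i + s' + δ + (N + ν i : ℕ) * δ by push_cast; ring,
      ← sf_add, show δ + s' - -t i = δ + s' + x i + ((ν + l) i : ℕ) * δ by
        rw [ht]; unfold top; ring, ← sf_add]
    congr 1
    · ring
    · simp only [Pi.add_apply]; ring
  have e2 : ∀ s' : ℂ, (∏ i, sf f δ (x i + δ + s' - d2) (ν i))
        * ∏ i, sf f δ (δ + s' + x i - d2 + ν i * δ) (l i)
      = ∏ i, sf f δ (δ + s' + x i - d2) ((ν + l) i) := by
    intro s'
    rw [← Finset.prod_mul_distrib]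
    refine Finset.prod_congr rfl fun i _ => ?_
    rw [Pi.add_apply, sf_add, show x i + δ + s' - d2 = δ + s' + x i - d2 by ring]
  have e3 : ∀ s' c : ℂ, sf f δ (δ + s' - c) N * sf f δ (δ + s' - c + N * δ) M
      = sf f δ (δ + s' - c) (N + M) := fun s' c => (sf_add f δ _ N M).symm
  simp only [Finset.prod_div_distrib, Finset.prod_mul_distrib]
  have q1 : ∀ i, δ + (s + N * δ) + (x i + ν i * δ) = δ + s + x i + (N + ν i) * δ := by
    intro i; ring
  have q2 : ∀ i, δ + (s + N * δ) + (x i + ν i * δ) - (s - st)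
      = δ + st + x i + (N + ν i) * δ := by
    intro i; ring
  have q3 : ∀ i, δ + (s + N * δ) + (x i + ν i * δ) - (d2 + N * δ)
      = δ + s + x i - d2 + ν i * δ := by
    intro i; ring
  have q4 : ∀ i, δ + (s + N * δ) + (x i + ν i * δ) - (d2 + N * δ) - (s - st)
      = δ + st + x i - d2 + ν i * δ := by
    intro i; ring
  have q5 : ∀ c, δ + (s + N * δ) - c = δ + s - c + N * δ := by intro c; ring
  have q6 : ∀ c, δ + (s + N * δ) - c - (s - st) = δ + st - c + N * δ := by intro c; ring
  simp only [q4, q6]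
  simp only [q2, q3]
  simp only [q1, q5]
  have E1 := e1 s
  have E1t := e1 st
  have E2 := e2 s
  have E2t := e2 st
  have E3 := e3 s c0
  have E3t := e3 st c0
  have E4 := e3 s c1
  have E4t := e3 st c1
  have n1 : ∏ j, sf f δ (δ + s - -t j) N ≠ 0 := Finset.prod_ne_zero_iff.mpr fun j _ =>
    ((hs j).of _ ((ν + l) j + 1 : ℕ) (by rw [ht]; unfold top; push_cast; ring)).sf N
  have n2 : ∏ i, sf f δ (x i + δ + st - d2) (ν i) ≠ 0 := Finset.prod_ne_zero_iff.mpr fun i _ =>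
    ((h2 i).of _ 1 (by push_cast; ring)).sf _
  have n3 : sf f δ (δ + st - c0) N ≠ 0 := (hc0.of _ 1 (by push_cast; ring)).sf N
  have n4 : sf f δ (δ + st - c1) N ≠ 0 := (hc1.of _ 1 (by push_cast; ring)).sf N
  rw [← E2, ← E2t, ← E3, ← E3t, ← E4, ← E4t]
  generalize ∏ i, sf f δ (x i + s + δ) (N + ν i) = a1 at *
  generalize ∏ i, sf f δ (δ + s + x i + (N + ν i) * δ) (l i) = a2 at *
  generalize ∏ i, sf f δ (δ + s + x i) ((ν + l) i) = a3 at *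
  generalize ∏ j, sf f δ (δ + s - -t j) N = a4 at *
  generalize ∏ i, sf f δ (x i + st + δ) (N + ν i) = b1 at *
  generalize ∏ i, sf f δ (δ + st + x i + (N + ν i) * δ) (l i) = b2 at *
  generalize ∏ i, sf f δ (δ + st + x i) ((ν + l) i) = b3 at *
  generalize ∏ j, sf f δ (δ + st - -t j) N = b4 at *
  generalize ∏ i, sf f δ (x i + δ + s - d2) (ν i) = a5 at *
  generalize ∏ i, sf f δ (x i + δ + st - d2) (ν i) = b5 at *
  generalize ∏ i, sf f δ (δ + s + x i - d2 + ν i * δ) (l i) = a6 at *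
  generalize ∏ i, sf f δ (δ + st + x i - d2 + ν i * δ) (l i) = b6 at *
  generalize sf f δ (δ + s - c0) N = a7 at *
  generalize sf f δ (δ + s - c1) N = a8 at *
  generalize sf f δ (δ + st - c0) N = b7 at *
  generalize sf f δ (δ + st - c1) N = b8 at *
  generalize sf f δ (δ + s - c0 + N * δ) M = a9 at *
  generalize sf f δ (δ + s - c1 + N * δ) M = a10 at *
  generalize sf f δ (δ + st - c0 + N * δ) M = b9 at *
  generalize sf f δ (δ + st - c1 + N * δ) M = b10 at *
  have ha3 : a3 = a1 * a2 / a4 := by rw [eq_div_iff n1, E1]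
  have hb3 : b1⁻¹ * b2⁻¹ = b3⁻¹ * b4⁻¹ := by rw [← mul_inv, E1t, mul_inv]
  rw [ha3]
  generalize (∏ j, ∏ i, sf f δ (x i + -t j) (ν i)) = p1
  generalize (∏ i, sf f δ (x i + c2t) (ν i)) = p2
  generalize (∏ i, sf f δ (x i + c0) (ν i)) = p3
  generalize (∏ i, sf f δ (x i + c1) (ν i)) = p4
  generalize (∏ i, sf f δ (x i + δ + st - d0t) (ν i)) = p5
  generalize (∏ i, sf f δ (x i + δ + st - d1t) (ν i)) = p6
  generalize sf f δ (δ + st - c2t) N = p7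
  generalize sf f δ d0t N = p8
  generalize sf f δ d1t N = p9
  generalize sf f δ d2 N = p10
  generalize Bs f δ x st ν = p11
  have hb5 : b5 * b5⁻¹ = 1 := mul_inv_cancel₀ n2
  have hb7 : b7 * b7⁻¹ = 1 := mul_inv_cancel₀ n3
  have hb8 : b8 * b8⁻¹ = 1 := mul_inv_cancel₀ n4
  simp only [div_eq_mul_inv, mul_inv]
  calc _ = (b1⁻¹ * b2⁻¹) * (p11 * p2 * p7⁻¹ * p8 * p5⁻¹ * p9 * p6⁻¹ * p1 * a4⁻¹ * p3 * a7⁻¹ * p4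
        * a8⁻¹ * p10 * a5⁻¹ * a1 * a2 * b6 * a6⁻¹ * b9 * b10 * a9⁻¹ * a10⁻¹) := by ring
    _ = (b3⁻¹ * b4⁻¹) * (p11 * p2 * p7⁻¹ * p8 * p5⁻¹ * p9 * p6⁻¹ * p1 * a4⁻¹ * p3 * a7⁻¹ * p4
        * a8⁻¹ * p10 * a5⁻¹ * a1 * a2 * b6 * a6⁻¹ * b9 * b10 * a9⁻¹ * a10⁻¹)
        * ((b5 * b5⁻¹) * (b7 * b7⁻¹) * (b8 * b8⁻¹)) := by rw [hb3, hb5, hb7, hb8]; ring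
    _ = _ := by ring

/-- The Bailey transformation for generic parameters.  The factors with `c₂`, `d₀`, `d₁` are
expanded by the Jackson summation, the order of summation is exchanged, and the resulting inner
sum is evaluated by the Jackson summation again. -/
theorem bailey_generic [DecidableEq ι] (f : ℂ → ℂ) (hodd : ∀ t : ℂ, f (-t) = -f t)
    (hcont : Continuous f) (hdense : ∀ c : ℂ, Dense {ε : ℂ | f (c + ε) ≠ 0})
    (hRiem : ∀ x y u v : ℂ,
      f (x + y) * f (x - y) * f (u + v) * f (u - v) =
        f (x + u) * f (x - u) * f (y + v) * f (y - v)
          - f (x + v) * f (x - v) * f (y + u) * f (y - u))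
    (δ : ℂ) (hδ : ∀ k : ℤ, k ≠ 0 → f ((k : ℂ) * δ) ≠ 0)
    (α : ι → ℕ) (x : ι → ℂ) (s c0 c1 c2 d0 d1 d2 st c2t d0t d1t : ℂ)
    (hbal : c0 + c1 + c2 + d0 + d1 + d2 = 2 * δ + 3 * s + (∑ i, α i : ℕ) * δ)
    (hst : st = δ + 2 * s - c2 - d0 - d1) (hc2t : c2t = δ + s - d0 - d1)
    (hd0t : d0t = δ + s - c2 - d1) (hd1t : d1t = δ + s - c2 - d0)
    (hin : JG f δ x st c2t s d0t d1t) (hout : JG f δ x s c0 c1 d2 (s - st)) :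
    ∑ μ ∈ Finset.Iic α, T3 f δ (top δ α x) x s c0 c1 c2 d0 d1 d2 μ
      = Qf f δ α x s c0 c1 d2 st
        * ∑ ν ∈ Finset.Iic α, T3 f δ (top δ α x) x st c0 c1 c2t d0t d1t d2 ν := by
  have hexp : ∀ μ : ι → ℕ, T3 f δ (top δ α x) x s c0 c1 c2 d0 d1 d2 μ
      = ∑ ν ∈ Finset.Iic μ, Bs f δ x s μ * (∏ j, Uf f δ x s (-top δ α x j) μ)
        * (Uf f δ x s c0 μ * Uf f δ x s c1 μ * Vf f δ x s d2 μ)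
        * (sf f δ (s - st) (∑ i, μ i) / ∏ i, sf f δ (δ + st + x i) (μ i))
        * T2 f δ (top δ μ x) x st c2t (s + (∑ i, μ i : ℕ) * δ) d0t d1t ν := by
    intro μ
    have hJ : JG f δ x st c2t (s + (∑ i, μ i : ℕ) * δ) d0t d1t :=
      { hin with
        hc1 := hin.hc1.of _ (-(∑ i, μ i : ℕ)) (by push_cast; ring)
        he1 := hin.he1.of _ (-(∑ i, μ i : ℕ)) (by push_cast; ring) }
    rw [← Finset.mul_sum, jackson f hodd hcont hdense hRiem δ hδ _ μ x st c2t _ d0t d1t rfl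
      (by rw [hst, hc2t, hd0t, hd1t]; ring) hJ,
      R2_inner f hodd δ μ x s c2 d0 d1 st c2t d0t d1t hst hc2t hd0t hd1t]
    unfold T3
    have n1 : sf f δ (s - st) (∑ i, μ i) ≠ 0 := hout.hd2.sf _
    have n2 : ∏ i, sf f δ (δ + st + x i) (μ i) ≠ 0 := Finset.prod_ne_zero_iff.mpr fun i _ =>
      ((hin.hs i).of _ 1 (by push_cast; ring)).sf _
    field_simp
  rw [Finset.sum_congr rfl fun μ _ => hexp μ, sum_triangle, Finset.mul_sum]
  refine Finset.sum_congr rfl fun ν hν => ?_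
  have hνα : ν + (α - ν) = α := add_tsub_cancel_of_le (Finset.mem_Iic.mp hν)
  obtain ⟨γ, hγ⟩ : ∃ γ, α - ν = γ := ⟨_, rfl⟩
  rw [hγ] at hνα ⊢
  have htop : top δ α x = top δ γ fun i => x i + ν i * δ := by
    rw [← hνα]
    funext i
    simp only [top, Pi.add_apply]
    push_cast
    ring
  have hsum : ∑ i, α i = (∑ i, ν i) + ∑ i, γ i := by
    rw [← hνα]; simp [Finset.sum_add_distrib]
  simp only [double_summand f hodd δ hδ (top δ α x) x s c0 c1 d2 st c2t d0t d1t ν _ hin.hx hout.hs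
    hout.hd2]
  rw [← Finset.mul_sum]
  have hJ := jackson f hodd hcont hdense hRiem δ hδ _ γ (fun i => x i + ν i * δ)
    (s + (∑ i, ν i : ℕ) * δ) c0 c1 (d2 + (∑ i, ν i : ℕ) * δ) (s - st) rfl
    (by
      rw [hsum] at hbal
      push_cast at hbal ⊢
      rw [hst]
      linear_combination hbal)
    (hout.shift ν (∑ i, ν i : ℕ) (∑ i, ν i : ℕ) 0 (fun _ => rfl) (by push_cast; ring)
      (by push_cast; ring) (by push_cast; ring))
  rw [← htop] at hJ
  rw [hJ, ← hνα]
  exact Kf_mul_R2 f δ ν γ x s c0 c1 d2 st c2t d0t d1t hout.hs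
    (hout.he0.of _ 0 (by push_cast; ring)) (hout.he1.of _ 0 (by push_cast; ring))
    fun i => (hout.h02 i).of _ 0 (by push_cast; ring)


end bailey

/-! ### The series of the statement as a sum of generic summands -/

/-- The contribution of a pair of variables to the quotient of difference products: both sides
are `± [y - bδ]_{a+b+1}`. -/
theorem pair_factor (f : ℂ → ℂ) (hodd : ∀ t : ℂ, f (-t) = -f t) (δ y : ℂ) (a b : ℕ) :
    f (y + a * δ - b * δ) * (sf f δ (y - b * δ) a * sf f δ (-y - a * δ) b)
      = f y * (sf f δ (y + δ) a * sf f δ (-y + δ) b) := by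
  have r1 := sf_reflect f hodd δ (-y - a * δ) (y + (a + 1 - b) * δ) b (by ring)
  have r2 := sf_reflect f hodd δ (-y + δ) (y - b * δ) b (by ring)
  have e1 := sf_add f δ (y - b * δ) (a + 1) b
  have e2 := sf_add f δ (y - b * δ) (b + 1) a
  rw [sf_add f δ _ a 1, sf_one'] at e1
  rw [sf_add f δ _ b 1, sf_one', add_right_comm, add_comm b a, add_right_comm a b 1,
    e1] at e2
  rw [r1, r2]
  push_cast at e2
  rw [show y - b * δ + a * δ = y + a * δ - b * δ by ring,
    show y - b * δ + (a + 1) * δ = y + (a + 1 - b) * δ by ring,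
    show y - b * δ + b * δ = y by ring,
    show y - b * δ + (b + 1) * δ = y + δ by ring] at e2
  linear_combination (-1) ^ b * e2

theorem prod_prod_split {m : ℕ} (F : Fin m → Fin m → ℂ) :
    ∏ i, ∏ j, F i j = (∏ i, F i i) * ∏ i, ∏ j ∈ Finset.univ.filter (fun j => i < j),
      F i j * F j i := by
  have h1 : ∀ i, ∏ j, F i j = F i i * ((∏ j ∈ Finset.univ.filter (fun j => i < j), F i j)
      * ∏ j ∈ Finset.univ.filter (fun j => j < i), F i j) := by
    intro i
    rw [← Finset.mul_prod_erase Finset.univ _ (Finset.mem_univ i),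
      ← Finset.prod_filter_mul_prod_filter_not (Finset.univ.erase i) (fun j => i < j)]
    congr 2
    · refine Finset.prod_congr ?_ fun _ _ => rfl
      ext j
      simp only [Finset.mem_filter, Finset.mem_erase, Finset.mem_univ]
      grind
    · refine Finset.prod_congr ?_ fun _ _ => rfl
      ext j
      simp only [Finset.mem_filter, Finset.mem_erase, Finset.mem_univ]
      grind
  simp only [h1, Finset.prod_mul_distrib]
  congr 2
  apply Finset.prod_comm'
  simp

/-- The quotient of difference products and the factors `[x_i - x_j + δ]_{μ_i}` combine to the
symmetric product used in `Bs`. -/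
theorem Del_factor (f : ℂ → ℂ) (hodd : ∀ t : ℂ, f (-t) = -f t) (δ : ℂ) {m : ℕ}
    (x : Fin m → ℂ) (μ : Fin m → ℕ) :
    Del f (fun i => x i + (μ i : ℂ) * δ) * ∏ i, ∏ j, sf f δ (x i - x j - μ j * δ) (μ i)
      = (-1) ^ (∑ i, μ i) * Del f x * ∏ i, ∏ j, sf f δ (x i - x j + δ) (μ i) := by
  rw [prod_prod_split, prod_prod_split, ← Finset.prod_pow_eq_pow_sum]
  unfold Del
  have e1 : ∀ i, sf f δ (x i - x i - μ i * δ) (μ i)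
      = (-1) ^ μ i * sf f δ (x i - x i + δ) (μ i) := fun i =>
    sf_reflect f hodd δ _ _ _ (by ring)
  have e2 : (∏ i : Fin m, ∏ j ∈ Finset.univ.filter (fun j => i < j),
        f (x i + μ i * δ - (x j + μ j * δ)))
      * (∏ i : Fin m, ∏ j ∈ Finset.univ.filter (fun j => i < j),
        sf f δ (x i - x j - μ j * δ) (μ i) * sf f δ (x j - x i - μ i * δ) (μ j))
      = (∏ i : Fin m, ∏ j ∈ Finset.univ.filter (fun j => i < j), f (x i - x j))
      * (∏ i : Fin m, ∏ j ∈ Finset.univ.filter (fun j => i < j),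
        sf f δ (x i - x j + δ) (μ i) * sf f δ (x j - x i + δ) (μ j)) := by
    simp only [← Finset.prod_mul_distrib]
    refine Finset.prod_congr rfl fun i _ => Finset.prod_congr rfl fun j _ => ?_
    have := pair_factor f hodd δ (x i - x j) (μ i) (μ j)
    rw [neg_sub] at this
    rw [show x i + μ i * δ - (x j + μ j * δ) = x i - x j + μ i * δ - μ j * δ by ring, this]
  simp only [e1]
  rw [Finset.prod_mul_distrib]
  linear_combination ((∏ i, (-1) ^ μ i) * ∏ i, sf f δ (x i - x i + δ) (μ i)) * e2

theorem Del_ne_zero (f : ℂ → ℂ) {m : ℕ} (x : Fin m → ℂ)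
    (h : ∀ i j, i ≠ j → f (x i - x j) ≠ 0) : Del f x ≠ 0 := by
  unfold Del
  refine Finset.prod_ne_zero_iff.mpr fun i _ => Finset.prod_ne_zero_iff.mpr fun j hj => ?_
  exact h i j (ne_of_lt (Finset.mem_filter.mp hj).2)

theorem Eterm_eq_T3 (f : ℂ → ℂ) (hodd : ∀ t : ℂ, f (-t) = -f t) (δ : ℂ)
    (hδ : ∀ k : ℤ, k ≠ 0 → f ((k : ℂ) * δ) ≠ 0) {m : ℕ} (a x : Fin m → ℂ)
    (α μ : Fin m → ℕ) (ha : ∀ i, a i = -(α i : ℂ) * δ) (s c0 c1 c2 d0 d1 d2 : ℂ)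
    (hx : ∀ i j, i ≠ j → NZ f δ (x i - x j)) :
    Eterm f δ a x s ![c0, c1, c2] ![d0, d1, d2] μ
      = T3 f δ (top δ α x) x s c0 c1 c2 d0 d1 d2 μ := by
  have hD := Del_factor f hodd δ x μ
  have nD := Del_ne_zero f x fun i j h => (hx i j h).ne
  have n1 : ∏ i, ∏ j, sf f δ (x i - x j + δ) (μ i) ≠ 0 := by
    refine Finset.prod_ne_zero_iff.mpr fun i _ => Finset.prod_ne_zero_iff.mpr fun j _ => ?_
    by_cases h : i = j
    · subst h
      refine sf_ne_zero _ _ _ _ fun l _ => ?_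
      have := hδ (l + 1) (by omega)
      convert this using 2
      push_cast; ring
    · exact ((hx i j h).of _ 1 (by push_cast; ring)).sf _
  have n2 : ∏ i, ∏ j, sf f δ (x i - x j - μ j * δ) (μ i) ≠ 0 := by
    refine Finset.prod_ne_zero_iff.mpr fun i _ => Finset.prod_ne_zero_iff.mpr fun j _ => ?_
    by_cases h : i = j
    · subst h
      refine sf_ne_zero _ _ _ _ fun l hl => ?_
      have := hδ (l - μ i) (by omega)
      convert this using 2
      push_cast; ring
    · exact ((hx i j h).of _ (-μ j) (by push_cast; ring)).sf _
  have hD' : Del f (fun i => x i + (μ i : ℂ) * δ) / Del f x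
      * (∏ i, ∏ j, sf f δ (x i - x j + δ) (μ i))⁻¹
      = (-1) ^ (∑ i, μ i) * (∏ i, ∏ j, sf f δ (x i - x j - μ j * δ) (μ i))⁻¹ := by
    rw [← div_eq_mul_inv, ← div_eq_mul_inv, div_div, div_eq_div_iff (mul_ne_zero nD n1) n2, hD,
      mul_assoc]
  unfold Eterm T3 Bs Uf Vf top
  simp only [Fin.prod_univ_three, Matrix.cons_val_zero, Matrix.cons_val_one, Matrix.cons_val,
    Finset.prod_mul_distrib, Finset.prod_div_distrib]
  rw [← hD']
  rw [Finset.prod_comm (f := fun j i => sf f δ (x i - x j + δ) (μ i)),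
    Finset.prod_comm (f := fun j i => sf f δ (x i - x j + a j) (μ i)),
    Finset.prod_comm (f := fun j i => sf f δ (x i + -(x j + α j * δ)) (μ i))]
  have e1 : ∀ i j, x i + -(x j + α j * δ) = x i - x j + a j := fun i j => by rw [ha]; ring
  have e2 : ∀ j, δ + s - -(x j + α j * δ) = δ + s + x j - a j := fun j => by rw [ha]; ring
  simp only [e1, e2]
  push_cast
  simp only [div_eq_mul_inv, mul_inv]
  ring

/-- The prefactor of the transformation. -/
noncomputable def Pref (f : ℂ → ℂ) (δ : ℂ) {m : ℕ} (a x : Fin m → ℂ) (α : Fin m → ℕ)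
    (s c0 c1 d2 : ℂ) : ℂ :=
  (sf f δ (δ + s - c0) (∑ i, α i) * sf f δ (δ + s - c1) (∑ i, α i)
      / (sf f δ (δ + s - c0 - d2) (∑ i, α i)
        * sf f δ (δ + s - c1 - d2) (∑ i, α i)))
    * (∏ i, sf f δ (δ + s + x i - d2) (α i)
          * sf f δ (δ + s - x i + a i - (∑ j, a j) - c0 - c1 - d2) (α i)
        / (sf f δ (δ + s + x i) (α i)
          * sf f δ (δ + s - x i + a i - (∑ j, a j) - c0 - c1) (α i)))

/-- The prefactor of the statement is the inverse of the one found generically; the factors are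
matched by reversing shifted factorials. -/
theorem Pref_mul_Qf (f : ℂ → ℂ) (hodd : ∀ t : ℂ, f (-t) = -f t) (δ : ℂ) {m : ℕ}
    (a x : Fin m → ℂ) (α : Fin m → ℕ) (ha : ∀ i, a i = -(α i : ℂ) * δ) (s c0 c1 d2 st : ℂ)
    (hb : c0 + c1 + d2 = δ + s + st + (∑ i, α i : ℕ) * δ)
    (h : JG f δ x s c0 c1 d2 (s - st)) :
    Pref f δ a x α s c0 c1 d2 * Qf f δ α x s c0 c1 d2 st = 1 := by
  have hA : ∑ j, a j = -((∑ i, α i : ℕ) : ℂ) * δ := by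
    simp only [ha]
    push_cast
    rw [neg_mul, Finset.sum_mul, ← Finset.sum_neg_distrib]
    simp only [neg_mul]
  unfold Pref Qf
  set N := ∑ i, α i
  have r1 : sf f δ (δ + st - c0) N = (-1) ^ N * sf f δ (δ + s - c1 - d2) N :=
    sf_reflect f hodd δ _ _ N (by linear_combination -hb)
  have r2 : sf f δ (δ + st - c1) N = (-1) ^ N * sf f δ (δ + s - c0 - d2) N :=
    sf_reflect f hodd δ _ _ N (by linear_combination -hb)
  have r3 : ∀ i, sf f δ (δ + s - x i + a i - (∑ j, a j) - c0 - c1 - d2) (α i)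
      = (-1) ^ (α i) * sf f δ (δ + st + x i) (α i) := fun i =>
    sf_reflect f hodd δ _ _ _ (by rw [hA, ha]; linear_combination -hb)
  have r4 : ∀ i, sf f δ (δ + s - x i + a i - (∑ j, a j) - c0 - c1) (α i)
      = (-1) ^ (α i) * sf f δ (δ + st + x i - d2) (α i) := fun i =>
    sf_reflect f hodd δ _ _ _ (by rw [hA, ha]; linear_combination -hb)
  have q1 : sf f δ (δ + st - c0) N ≠ 0 := (h.he0.of _ 1 (by push_cast; ring)).sf _
  have q2 : sf f δ (δ + st - c1) N ≠ 0 := (h.he1.of _ 1 (by push_cast; ring)).sf _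
  have q3 : sf f δ (δ + s - c0) N ≠ 0 := (h.hc0.of _ 1 (by push_cast; ring)).sf _
  have q4 : sf f δ (δ + s - c1) N ≠ 0 := (h.hc1.of _ 1 (by push_cast; ring)).sf _
  have nN : ((-1 : ℂ) ^ N) ≠ 0 := pow_ne_zero _ (by norm_num)
  rw [r1] at q1 ⊢
  rw [r2] at q2 ⊢
  have q1' := right_ne_zero_of_mul q1
  have q2' := right_ne_zero_of_mul q2
  have hs : ((-1 : ℂ) ^ N) * (-1) ^ N = 1 := by rw [← mul_pow]; norm_num
  have hp : (∏ i, sf f δ (δ + s + x i - d2) (α i)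
          * sf f δ (δ + s - x i + a i - (∑ j, a j) - c0 - c1 - d2) (α i)
        / (sf f δ (δ + s + x i) (α i)
          * sf f δ (δ + s - x i + a i - (∑ j, a j) - c0 - c1) (α i)))
      * (∏ i, sf f δ (δ + s + x i) (α i) * sf f δ (δ + st + x i - d2) (α i)
          / (sf f δ (δ + s + x i - d2) (α i) * sf f δ (δ + st + x i) (α i))) = 1 := by
    rw [← Finset.prod_mul_distrib]
    refine Finset.prod_eq_one fun i _ => ?_
    rw [r3, r4]
    have p1 : sf f δ (δ + s + x i) (α i) ≠ 0 := ((h.hs i).of _ 1 (by push_cast; ring)).sf _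
    have p2 : sf f δ (δ + s + x i - d2) (α i) ≠ 0 := ((h.h0 i).of _ 1 (by push_cast; ring)).sf _
    have p3 : sf f δ (δ + st + x i) (α i) ≠ 0 := ((h.h2 i).of _ 1 (by push_cast; ring)).sf _
    have p4 : sf f δ (δ + st + x i - d2) (α i) ≠ 0 :=
      ((h.h02 i).of _ 1 (by push_cast; ring)).sf _
    have p5 : ((-1 : ℂ) ^ (α i)) ≠ 0 := pow_ne_zero _ (by norm_num)
    field_simp
  rw [mul_mul_mul_comm, hp, mul_one]
  field_simp
  linear_combination hs

/-- The transformation for finite sums and generic parameters. -/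
theorem bailey_Eterm (f : ℂ → ℂ) (hodd : ∀ t : ℂ, f (-t) = -f t) (hcont : Continuous f)
    (hdense : ∀ c : ℂ, Dense {ε : ℂ | f (c + ε) ≠ 0})
    (hRiem : ∀ x y u v : ℂ,
      f (x + y) * f (x - y) * f (u + v) * f (u - v) =
        f (x + u) * f (x - u) * f (y + v) * f (y - v)
          - f (x + v) * f (x - v) * f (y + u) * f (y - u))
    (δ : ℂ) (hδ : ∀ k : ℤ, k ≠ 0 → f ((k : ℂ) * δ) ≠ 0)
    {m : ℕ} (a x : Fin m → ℂ) (α : Fin m → ℕ) (ha : ∀ i, a i = -(α i : ℂ) * δ)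
    (s c0 c1 c2 d0 d1 d2 st c2t d0t d1t : ℂ)
    (hbal : c0 + c1 + c2 + d0 + d1 + d2 = 2 * δ + 3 * s + (∑ i, α i : ℕ) * δ)
    (hst : st = δ + 2 * s - c2 - d0 - d1) (hc2t : c2t = δ + s - d0 - d1)
    (hd0t : d0t = δ + s - c2 - d1) (hd1t : d1t = δ + s - c2 - d0)
    (hin : JG f δ x st c2t s d0t d1t) (hout : JG f δ x s c0 c1 d2 (s - st)) :
    ∑ μ ∈ Finset.Iic α, Eterm f δ a x st ![c0, c1, c2t] ![d0t, d1t, d2] μ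
      = Pref f δ a x α s c0 c1 d2
        * ∑ μ ∈ Finset.Iic α, Eterm f δ a x s ![c0, c1, c2] ![d0, d1, d2] μ := by
  have hb : c0 + c1 + d2 = δ + s + st + (∑ i, α i : ℕ) * δ := by
    rw [hst]; linear_combination hbal
  have h := bailey_generic f hodd hcont hdense hRiem δ hδ α x s c0 c1 c2 d0 d1 d2 st c2t d0t d1t
    hbal hst hc2t hd0t hd1t hin hout
  simp only [Eterm_eq_T3 f hodd δ hδ a x α _ ha _ _ _ _ _ _ _ hout.hx]
  rw [h, ← mul_assoc, Pref_mul_Qf f hodd δ a x α ha s c0 c1 d2 st hb hout, one_mul]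

theorem Evw_eq_sum (f : ℂ → ℂ) (f0 : f 0 = 0) (δ : ℂ) {m n : ℕ} (a x : Fin m → ℂ)
    (α : Fin m → ℕ) (ha : ∀ i, a i = -(α i : ℂ) * δ) (s : ℂ) (u v : Fin n → ℂ) :
    Evw f δ a x s u v = ∑ μ ∈ Finset.Iic α, Eterm f δ a x s u v μ := by
  refine tsum_eq_sum fun μ hμ => ?_
  rw [Finset.mem_Iic, Pi.le_def] at hμ
  push Not at hμ
  obtain ⟨i, hi⟩ := hμ
  unfold Eterm
  have : ∏ j, (sf f δ (s + x j) (∑ i, μ i) / sf f δ (δ + s + x j - a j) (∑ i, μ i))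
        * ∏ i, sf f δ (x i - x j + a j) (μ i) / sf f δ (x i - x j + δ) (μ i) = 0 := by
    refine Finset.prod_eq_zero (Finset.mem_univ i) ?_
    rw [Finset.prod_eq_zero (Finset.mem_univ i), mul_zero]
    rw [sf_eq_zero f δ _ _ (α i) hi (by rw [ha, ← f0]; congr 1; ring), zero_div]
  rw [this, mul_zero, zero_mul]

/-! ### Removing the genericity assumptions -/

theorem dense_ne_zero (f : ℂ → ℂ) (hf : f ≠ 0) (hdiff : Differentiable ℂ f) (c r : ℂ)
    (hr : r ≠ 0) : Dense {ε : ℂ | f (c + r * ε) ≠ 0} := by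
  have hg : Differentiable ℂ fun ε : ℂ => f (c + r * ε) := by fun_prop
  have han : AnalyticOnNhd ℂ (fun ε : ℂ => f (c + r * ε)) Set.univ := fun z _ => hg.analyticAt z
  rw [← Set.compl_ofPred, ← interior_eq_empty_iff_dense_compl, Set.eq_empty_iff_forall_notMem]
  intro z hz
  have hev : (fun ε : ℂ => f (c + r * ε)) =ᶠ[nhds z] fun _ => 0 := mem_interior_iff_mem_nhds.mp hz
  have := han.eq_of_eventuallyEq (fun _ _ => analyticAt_const) hev
  apply hf
  funext y
  have h := congrFun this ((y - c) / r)
  rwa [mul_div_cancel₀ _ hr, add_sub_cancel] at h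

/-- Along a line on which `c` really moves, genericity holds off a meagre set. -/
theorem eventually_NZ (f : ℂ → ℂ) (hf : f ≠ 0) (hdiff : Differentiable ℂ f) (δ : ℂ)
    (g : ℂ → ℂ) (r : ℂ) (hr : r ≠ 0) (hg : ∀ ε, g ε = g 0 + r * ε) :
    ∀ᶠ ε in residual ℂ, NZ f δ (g ε) := by
  unfold NZ
  rw [eventually_countable_forall]
  intro k
  refine residual_of_dense_open (isOpen_ne_fun ?_ continuous_const) ?_
  · have : g = fun ε => g 0 + r * ε := funext hg
    rw [this]
    have := hdiff.continuous
    fun_prop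
  · convert dense_ne_zero f hf hdiff (g 0 + k * δ) r hr using 3 with ε
    change f (g ε + k * δ) ≠ 0 ↔ _
    rw [hg ε, add_right_comm]

theorem Eterm_continuousAt (f : ℂ → ℂ) (hcont : Continuous f) (δ : ℂ) {m n : ℕ}
    (a : Fin m → ℂ) (α μ : Fin m → ℕ) (hμ : μ ≤ α) (X : ℂ → Fin m → ℂ) (S : ℂ → ℂ)
    (U V : ℂ → Fin n → ℂ) (hX : ∀ i, Continuous fun ε => X ε i) (hS : Continuous S)
    (hU : ∀ k, Continuous fun ε => U ε k) (hV : ∀ k, Continuous fun ε => V ε k)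
    (h1 : ∀ i j, i ≠ j → f (X 0 i - X 0 j) ≠ 0)
    (h2 : ∀ i, f (X 0 i + S 0) ≠ 0)
    (h3 : ∀ (j : Fin m) (l : ℕ), l < ∑ i, α i →
      f (δ + S 0 + X 0 j - a j + (l : ℂ) * δ) ≠ 0)
    (h4 : ∀ (i j : Fin m) (l : ℕ), l < α i → f (X 0 i - X 0 j + δ + (l : ℂ) * δ) ≠ 0)
    (h5 : ∀ (k : Fin n) (l : ℕ), l < ∑ i, α i → f (δ + S 0 - U 0 k + (l : ℂ) * δ) ≠ 0)
    (h6 : ∀ (i : Fin m) (k : Fin n) (l : ℕ), l < α i →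
      f (X 0 i + δ + S 0 - V 0 k + (l : ℂ) * δ) ≠ 0) :
    ContinuousAt (fun ε => Eterm f δ a (X ε) (S ε) (U ε) (V ε) μ) 0 := by
  have hsum : ∑ i, μ i ≤ ∑ i, α i := Finset.sum_le_sum fun i _ => hμ i
  have csf : ∀ (g : ℂ → ℂ) (k : ℕ), Continuous g → Continuous fun ε => sf f δ (g ε) k := by
    intro g k hg
    unfold sf
    fun_prop
  unfold Eterm
  refine ((ContinuousAt.mul (ContinuousAt.mul ?_ ?_) ?_).mul ?_)
  · refine ContinuousAt.div ?_ ?_ (Del_ne_zero f _ h1) <;>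
    · unfold Del
      fun_prop
  · refine tendsto_finsetProd _ fun i _ => ContinuousAt.div ?_ ?_ (h2 i) <;> fun_prop
  · refine tendsto_finsetProd _ fun j _ => ContinuousAt.mul (ContinuousAt.div
      (csf _ _ (by fun_prop)).continuousAt (csf _ _ (by fun_prop)).continuousAt ?_)
      (tendsto_finsetProd _ fun i _ => ContinuousAt.div
        (csf _ _ (by fun_prop)).continuousAt (csf _ _ (by fun_prop)).continuousAt ?_)
    · exact sf_ne_zero _ _ _ _ fun l hl => h3 j l (by omega)
    · exact sf_ne_zero _ _ _ _ fun l hl => h4 i j l (hl.trans_le (hμ i))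
  · refine tendsto_finsetProd _ fun k _ => ContinuousAt.mul (ContinuousAt.div
      (csf _ _ (by fun_prop)).continuousAt (csf _ _ (by fun_prop)).continuousAt ?_)
      (tendsto_finsetProd _ fun i _ => ContinuousAt.div
        (csf _ _ (by fun_prop)).continuousAt (csf _ _ (by fun_prop)).continuousAt ?_)
    · exact sf_ne_zero _ _ _ _ fun l hl => h5 k l (by omega)
    · exact sf_ne_zero _ _ _ _ fun l hl => h6 i k l (hl.trans_le (hμ i))

theorem Pref_continuousAt (f : ℂ → ℂ) (hcont : Continuous f) (δ : ℂ) {m : ℕ}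
    (a : Fin m → ℂ) (α : Fin m → ℕ) (X : ℂ → Fin m → ℂ) (s : ℂ)
    (C0 C1 D2 : ℂ → ℂ) (hX : ∀ i, Continuous fun ε => X ε i) (hC0 : Continuous C0)
    (hC1 : Continuous C1) (hD2 : Continuous D2)
    (hp1 : ∀ l : ℕ, l < ∑ i, α i → f (δ + s - C0 0 - D2 0 + (l : ℂ) * δ) ≠ 0)
    (hp2 : ∀ l : ℕ, l < ∑ i, α i → f (δ + s - C1 0 - D2 0 + (l : ℂ) * δ) ≠ 0)
    (hp3 : ∀ (i : Fin m) (l : ℕ), l < α i → f (δ + s + X 0 i + (l : ℂ) * δ) ≠ 0)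
    (hp4 : ∀ (i : Fin m) (l : ℕ), l < α i →
      f (δ + s - X 0 i + a i - (∑ j, a j) - C0 0 - C1 0 + (l : ℂ) * δ) ≠ 0) :
    ContinuousAt (fun ε => Pref f δ a (X ε) α s (C0 ε) (C1 ε) (D2 ε)) 0 := by
  have csf : ∀ (g : ℂ → ℂ) (k : ℕ), Continuous g →
      ContinuousAt (fun ε => sf f δ (g ε) k) 0 := by
    intro g k hg
    unfold sf
    fun_prop
  unfold Pref
  refine ContinuousAt.mul (ContinuousAt.div ((csf _ _ (by fun_prop)).mul (csf _ _ (by fun_prop)))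
    ((csf _ _ (by fun_prop)).mul (csf _ _ (by fun_prop))) ?_)
    (tendsto_finsetProd _ fun i _ => ContinuousAt.div
      ((csf _ _ (by fun_prop)).mul (csf _ _ (by fun_prop)))
      ((csf _ _ (by fun_prop)).mul (csf _ _ (by fun_prop))) ?_)
  · exact mul_ne_zero (sf_ne_zero _ _ _ _ hp1) (sf_ne_zero _ _ _ _ hp2)
  · exact mul_ne_zero (sf_ne_zero _ _ _ _ (hp3 i)) (sf_ne_zero _ _ _ _ (hp4 i))

/-- Multiple Bailey transformation I under the type-B termination condition
`a_i = -α_i δ` (Theorem 4.3 (I), formula (4.14)). -/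
theorem multiple_bailey_transformation_I_typeB
    (f : ℂ → ℂ) (hf : f ≠ 0) (hodd : ∀ t : ℂ, f (-t) = -f t) (hdiff : Differentiable ℂ f)
    (hRiem : ∀ x y u v : ℂ,
      f (x + y) * f (x - y) * f (u + v) * f (u - v) =
        f (x + u) * f (x - u) * f (y + v) * f (y - v)
          - f (x + v) * f (x - v) * f (y + u) * f (y - u))
    (δ : ℂ) (hδ : ∀ k : ℤ, k ≠ 0 → f ((k : ℂ) * δ) ≠ 0)
    (m : ℕ) (a x : Fin m → ℂ) (s c0 c1 c2 d0 d1 d2 : ℂ) (α : Fin m → ℕ)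
    (ha : ∀ i, a i = -(α i : ℂ) * δ)
    (hbal : (∑ i, a i) + (c0 + c1 + c2 + d0 + d1 + d2) = 2 * δ + 3 * s)
    (st : ℂ) (hst : st = δ + 2 * s - c2 - d0 - d1)
    (c2t : ℂ) (hc2t : c2t = δ + s - d0 - d1)
    (d0t : ℂ) (hd0t : d0t = δ + s - c2 - d1)
    (d1t : ℂ) (hd1t : d1t = δ + s - c2 - d0)
    (h1 : ∀ i j, i ≠ j → f (x i - x j) ≠ 0)
    (h2 : ∀ i, f (x i + s) ≠ 0) (h2t : ∀ i, f (x i + st) ≠ 0)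
    (h3 : ∀ (j : Fin m) (l : ℕ), l < ∑ i, α i →
      f (δ + s + x j - a j + (l : ℂ) * δ) ≠ 0)
    (h3t : ∀ (j : Fin m) (l : ℕ), l < ∑ i, α i →
      f (δ + st + x j - a j + (l : ℂ) * δ) ≠ 0)
    (h4 : ∀ (i j : Fin m) (l : ℕ), l < α i → f (x i - x j + δ + (l : ℂ) * δ) ≠ 0)
    (h5 : ∀ (k : Fin 3) (l : ℕ), l < ∑ i, α i →
      f (δ + s - ![c0, c1, c2] k + (l : ℂ) * δ) ≠ 0)
    (h5t : ∀ (k : Fin 3) (l : ℕ), l < ∑ i, α i →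
      f (δ + st - ![c0, c1, c2t] k + (l : ℂ) * δ) ≠ 0)
    (h6 : ∀ (i : Fin m) (k : Fin 3) (l : ℕ), l < α i →
      f (x i + δ + s - ![d0, d1, d2] k + (l : ℂ) * δ) ≠ 0)
    (h6t : ∀ (i : Fin m) (k : Fin 3) (l : ℕ), l < α i →
      f (x i + δ + st - ![d0t, d1t, d2] k + (l : ℂ) * δ) ≠ 0)
    (hp1 : ∀ l : ℕ, l < ∑ i, α i → f (δ + s - c0 - d2 + (l : ℂ) * δ) ≠ 0)
    (hp2 : ∀ l : ℕ, l < ∑ i, α i → f (δ + s - c1 - d2 + (l : ℂ) * δ) ≠ 0)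
    (hp3 : ∀ (i : Fin m) (l : ℕ), l < α i → f (δ + s + x i + (l : ℂ) * δ) ≠ 0)
    (hp4 : ∀ (i : Fin m) (l : ℕ), l < α i →
      f (δ + s - x i + a i - (∑ j, a j) - c0 - c1 + (l : ℂ) * δ) ≠ 0) :
    Evw f δ a x st ![c0, c1, c2t] ![d0t, d1t, d2] =
      (sf f δ (δ + s - c0) (∑ i, α i) * sf f δ (δ + s - c1) (∑ i, α i)
          / (sf f δ (δ + s - c0 - d2) (∑ i, α i)
            * sf f δ (δ + s - c1 - d2) (∑ i, α i)))
        * (∏ i, sf f δ (δ + s + x i - d2) (α i)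
              * sf f δ (δ + s - x i + a i - (∑ j, a j) - c0 - c1 - d2) (α i)
            / (sf f δ (δ + s + x i) (α i)
              * sf f δ (δ + s - x i + a i - (∑ j, a j) - c0 - c1) (α i)))
        * Evw f δ a x s ![c0, c1, c2] ![d0, d1, d2] := by
  have f0 : f 0 = 0 := by
    have := hodd 0
    rw [neg_zero] at this
    exact self_eq_neg.mp this
  have hcont := hdiff.continuous
  have hdense : ∀ c : ℂ, Dense {ε : ℂ | f (c + ε) ≠ 0} := fun c => by
    simpa using dense_ne_zero f hf hdiff c 1 one_ne_zero
  have hA : ∑ j, a j = -((∑ i, α i : ℕ) : ℂ) * δ := by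
    simp only [ha]
    push_cast
    rw [neg_mul, Finset.sum_mul, ← Finset.sum_neg_distrib]
    simp only [neg_mul]
  rw [Evw_eq_sum f f0 δ a x α ha, Evw_eq_sum f f0 δ a x α ha]
  -- The line of perturbed parameters: the balancing condition is kept and every form whose
  -- genericity is needed has a nonzero direction.
  let X : ℂ → Fin m → ℂ := fun ε i => x i + (100 + i : ℕ) * ε
  have X0 : X 0 = x := by funext i; simp [X]
  have hX : ∀ i, Continuous fun ε => X ε i := fun i => by simp only [X]; fun_prop
  have nzx : ∀ (i : Fin m) (y : ℂ → ℂ) (p q : ℕ), p ≤ q + 99 → (∀ ε, y ε = y 0 + ((q : ℂ) - p) * ε) →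
      ∀ᶠ ε in residual ℂ, NZ f δ (X ε i + y ε) := by
    intro i y p q hp hy
    refine eventually_NZ f hf hdiff δ _ ((100 + i + q - p : ℤ) : ℂ) ?_ fun ε => ?_
    · exact_mod_cast show (100 + i + q - p : ℤ) ≠ 0 by omega
    · simp only [X]
      rw [hy ε]
      push_cast
      ring
  have nz : ∀ (y : ℂ → ℂ) (r : ℂ), r ≠ 0 → (∀ ε, y ε = y 0 + r * ε) →
      ∀ᶠ ε in residual ℂ, NZ f δ (y ε) := fun y r hr hy => eventually_NZ f hf hdiff δ y r hr hy
  have good : ∀ᶠ ε in residual ℂ,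
      ∑ μ ∈ Finset.Iic α, Eterm f δ a (X ε) (st - 3 * ε) ![c0 + ε, c1 + ε, c2t - 2 * ε]
          ![d0t - 2 * ε, d1t - 2 * ε, d2 - 5 * ε] μ
        = Pref f δ a (X ε) α s (c0 + ε) (c1 + ε) (d2 - 5 * ε)
          * ∑ μ ∈ Finset.Iic α, Eterm f δ a (X ε) s ![c0 + ε, c1 + ε, c2 + ε]
            ![d0 + ε, d1 + ε, d2 - 5 * ε] μ := by
    have g0 : ∀ᶠ ε in residual ℂ, ∀ i j, i ≠ j → NZ f δ (X ε i - X ε j) := by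
      simp only [eventually_countable_forall]
      intro i j hij
      refine nz _ ((i : ℂ) - j) ?_ fun ε => ?_
      · rw [sub_ne_zero]
        exact_mod_cast fun h => hij (Fin.ext h)
      · simp only [X]; push_cast; ring
    have g1 : ∀ᶠ ε in residual ℂ, ∀ i, NZ f δ (X ε i + (st - 3 * ε)) :=
      eventually_countable_forall.mpr fun i => nzx i _ 3 0 (by norm_num) fun ε => by push_cast; ring
    have g2 : ∀ᶠ ε in residual ℂ, ∀ i, NZ f δ (X ε i + (st - 3 * ε - (d0t - 2 * ε))) :=
      eventually_countable_forall.mpr fun i => nzx i _ 1 0 (by norm_num) fun ε => by push_cast; ring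
    have g3 : ∀ᶠ ε in residual ℂ, ∀ i, NZ f δ (X ε i + (st - 3 * ε - (d1t - 2 * ε))) :=
      eventually_countable_forall.mpr fun i => nzx i _ 1 0 (by norm_num) fun ε => by push_cast; ring
    have g4 : ∀ᶠ ε in residual ℂ, ∀ i,
        NZ f δ (X ε i + (st - 3 * ε - (d0t - 2 * ε) - (d1t - 2 * ε))) :=
      eventually_countable_forall.mpr fun i => nzx i _ 0 1 (by norm_num) fun ε => by push_cast; ring
    have g5 : ∀ᶠ ε in residual ℂ, ∀ i, NZ f δ (X ε i + s) :=
      eventually_countable_forall.mpr fun i =>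
        nzx i (fun _ => s) 0 0 (by norm_num) fun ε => by push_cast; ring
    have g6 : ∀ᶠ ε in residual ℂ, ∀ i, NZ f δ (X ε i + (s - (d2 - 5 * ε))) :=
      eventually_countable_forall.mpr fun i => nzx i _ 0 5 (by norm_num) fun ε => by push_cast; ring
    have g7 : ∀ᶠ ε in residual ℂ, ∀ i,
        NZ f δ (X ε i + (s - (d2 - 5 * ε) - (s - (st - 3 * ε)))) :=
      eventually_countable_forall.mpr fun i => nzx i _ 0 2 (by norm_num) fun ε => by push_cast; ring
    have k1 : ∀ᶠ ε in residual ℂ, NZ f δ (st - 3 * ε - (c2t - 2 * ε)) :=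
      nz _ (-1) (by norm_num) fun ε => by ring
    have k2 : ∀ᶠ ε in residual ℂ, NZ f δ (st - 3 * ε - s) :=
      nz _ (-3) (by norm_num) fun ε => by ring
    have k3 : ∀ᶠ ε in residual ℂ, NZ f δ (st - 3 * ε - (c2t - 2 * ε) - (d1t - 2 * ε)) :=
      nz _ 1 (by norm_num) fun ε => by ring
    have k4 : ∀ᶠ ε in residual ℂ, NZ f δ (st - 3 * ε - s - (d1t - 2 * ε)) :=
      nz _ (-1) (by norm_num) fun ε => by ring
    have k5 : ∀ᶠ ε in residual ℂ, NZ f δ (d1t - 2 * ε) :=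
      nz _ (-2) (by norm_num) fun ε => by ring
    have k6 : ∀ᶠ ε in residual ℂ, NZ f δ (s - (c0 + ε)) :=
      nz _ (-1) (by norm_num) fun ε => by ring
    have k7 : ∀ᶠ ε in residual ℂ, NZ f δ (s - (c1 + ε)) :=
      nz _ (-1) (by norm_num) fun ε => by ring
    have k8 : ∀ᶠ ε in residual ℂ, NZ f δ (s - (c0 + ε) - (s - (st - 3 * ε))) :=
      nz _ (-4) (by norm_num) fun ε => by ring
    have k9 : ∀ᶠ ε in residual ℂ, NZ f δ (s - (c1 + ε) - (s - (st - 3 * ε))) :=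
      nz _ (-4) (by norm_num) fun ε => by ring
    have k10 : ∀ᶠ ε in residual ℂ, NZ f δ (s - (st - 3 * ε)) :=
      nz _ 3 (by norm_num) fun ε => by ring
    filter_upwards [g0, g1, g2, g3, g4, g5, g6, g7, k1, k2, k3, k4, k5, k6, k7, k8, k9, k10]
      with ε g0 g1 g2 g3 g4 g5 g6 g7 k1 k2 k3 k4 k5 k6 k7 k8 k9 k10
    refine bailey_Eterm f hodd hcont hdense hRiem δ hδ a (X ε) α ha s (c0 + ε) (c1 + ε) (c2 + ε)
      (d0 + ε) (d1 + ε) (d2 - 5 * ε) (st - 3 * ε) (c2t - 2 * ε) (d0t - 2 * ε) (d1t - 2 * ε)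
      ?_ ?_ ?_ ?_ ?_ ?_ ?_
    · rw [hA] at hbal
      linear_combination hbal
    · rw [hst]; ring
    · rw [hc2t]; ring
    · rw [hd0t]; ring
    · rw [hd1t]; ring
    · exact
      { hx := g0
        hs := g1
        h0 := fun i => by simpa only [add_sub_assoc] using g2 i
        h2 := fun i => by simpa only [add_sub_assoc] using g3 i
        h02 := fun i => (g4 i).of _ 0 (by push_cast; ring)
        hc0 := k1, hc1 := k2, he0 := k3, he1 := k4, hd2 := k5 }
    · exact
      { hx := g0
        hs := g5
        h0 := fun i => (g6 i).of _ 0 (by push_cast; ring)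
        h2 := fun i => (g1 i).of _ 0 (by push_cast; ring)
        h02 := fun i => (g7 i).of _ 0 (by push_cast; ring)
        hc0 := k6, hc1 := k7, he0 := k8, he1 := k9, hd2 := k10 }
  have cont3 : ∀ a b c : ℂ → ℂ, Continuous a → Continuous b → Continuous c →
      ∀ k, Continuous fun ε => (![a ε, b ε, c ε] : Fin 3 → ℂ) k := by
    intro a b c ha hb hc k
    fin_cases k
    exacts [ha, hb, hc]
  have hL : ContinuousAt (fun ε => ∑ μ ∈ Finset.Iic α, Eterm f δ a (X ε) (st - 3 * ε)
      ![c0 + ε, c1 + ε, c2t - 2 * ε] ![d0t - 2 * ε, d1t - 2 * ε, d2 - 5 * ε] μ) 0 := by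
    refine tendsto_finsetSum _ fun μ hμ => Eterm_continuousAt f hcont δ a α μ
      (Finset.mem_Iic.mp hμ) X _ _ _ hX (by fun_prop)
      (cont3 _ _ _ (by fun_prop) (by fun_prop) (by fun_prop))
      (cont3 _ _ _ (by fun_prop) (by fun_prop) (by fun_prop)) ?_ ?_ ?_ ?_ ?_ ?_ <;>
    simpa only [X0, mul_zero, sub_zero, add_zero]
  have hR : ContinuousAt (fun ε => Pref f δ a (X ε) α s (c0 + ε) (c1 + ε) (d2 - 5 * ε)
      * ∑ μ ∈ Finset.Iic α, Eterm f δ a (X ε) s ![c0 + ε, c1 + ε, c2 + ε]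
        ![d0 + ε, d1 + ε, d2 - 5 * ε] μ) 0 := by
    refine ContinuousAt.mul (Pref_continuousAt f hcont δ a α X s _ _ _ hX (by fun_prop)
      (by fun_prop) (by fun_prop) ?_ ?_ ?_ ?_)
      (tendsto_finsetSum _ fun μ hμ => Eterm_continuousAt f hcont δ a α μ
        (Finset.mem_Iic.mp hμ) X (fun _ => s) _ _ hX (by fun_prop)
        (cont3 _ _ _ (by fun_prop) (by fun_prop) (by fun_prop))
        (cont3 _ _ _ (by fun_prop) (by fun_prop) (by fun_prop)) ?_ ?_ ?_ ?_ ?_ ?_) <;>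
    simpa only [X0, mul_zero, sub_zero, add_zero]
  have key := tendsto_nhds_unique_of_frequently_eq hL hR
    (mem_closure_iff_frequently.mp (dense_of_mem_residual good 0))
  simpa only [X0, mul_zero, sub_zero, add_zero, Pref] using key
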